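/- arXiv:1812.03031 — 3 statements merged into one kernel-verified Lean document; each statement's English description precedes it below -/
import Mathlib

section
/- For every mutual information value 0 < β ≤ 1 and every positive integer M, the binary information distillation function satisfies β · f_lower((M-1)/max{log(1/β), 1}) ≤ ID_M(2, β) ≤ β · f_upper((M-1)/max{log(1/β), 1}), where f_lower(t) = t/208 for t < 104 and f_lower(t) = 1 - 52/t for t ≥ 104, and f_upper(t) = min{3t, 1}. -/
/-!
`I(X;Y)` is a sum over the symbols of `Y` of mass times information per unit of mass.

*Lower bound.* For binary `X` the information per unit of mass grows as the posterior moves away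
from the prior, because the nearer posterior is a mixture of the prior and the farther one. Hence
little is lost by merging symbols on the same side of the prior whose information per unit of mass
lies in the same cell of a geometric grid of ratio `1 + 1/n`. That quantity is at most `5 / β`,
since a bit carrying `β` bits of information has no value of too small a probability, so
`O(n log (1/β))` cells suffice. Keep the best `M - 1` of them and merge the rest.

*Upper bound.* An erasure channel shows `ID_M(2, β) ≤ β`. For small `β`, take `X` uniform and the
biases of the posteriors proportional to the slopes of the chords of a partition of the semicircle
`θ ↦ (sin² θ, sin θ cos θ)`. By convexity of the half-disc, every set of symbols of mass `W` has
total bias `E` with `E² ≤ W (1 - W)`, so an `M`-cell quantizer obtains at most a multiple of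
`∑ (1 - W) = M - 1`, whereas tangents of `θ` in geometric progression make `I(X;Y)` larger by a
factor of order `log (1/β)`.
-/

open scoped BigOperators

/-- Mutual information (in bits) of a joint probability mass function `p` on `𝒳 × 𝒴`,
with the convention `0 · log 0 = 0`. -/
noncomputable def miBits {𝒳 𝒴 : Type*} (p : 𝒳 → 𝒴 → ℝ) : ℝ :=
  ∑' x, ∑' y, p x y * Real.logb 2 (p x y / ((∑' y', p x y') * (∑' x', p x' y)))

/-- `p` is a joint probability mass function. -/
def IsJointPMF {𝒳 𝒴 : Type*} (p : 𝒳 → 𝒴 → ℝ) : Prop :=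
  (∀ x y, 0 ≤ p x y) ∧ Summable (fun xy : 𝒳 × 𝒴 => p xy.1 xy.2) ∧ (∑' x, ∑' y, p x y) = 1

/-- Joint pmf of `(X, f(Y))` when `(X,Y) ~ p` and `f` is a deterministic `M`-level quantizer. -/
noncomputable def quantJoint {𝒳 𝒴 : Type*} (p : 𝒳 → 𝒴 → ℝ) {M : ℕ} (f : 𝒴 → Fin M) :
    𝒳 → Fin M → ℝ :=
  fun x m => ∑' y, if f y = m then p x y else 0

/-- `I(X;[Y]_M)`: the best mutual information achievable by a deterministic `M`-level
quantizer of `Y`. -/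
noncomputable def quantMI {𝒳 𝒴 : Type*} (p : 𝒳 → 𝒴 → ℝ) (M : ℕ) : ℝ :=
  ⨆ f : 𝒴 → Fin M, miBits (quantJoint p f)

/-- The information distillation function `ID_M(K, β)`. -/
noncomputable def ID (M K : ℕ) (β : ℝ) : ℝ :=
  sInf {v | ∃ p : Fin K → ℕ → ℝ, IsJointPMF p ∧ β ≤ miBits p ∧ v = quantMI p M}

/-- Binary entropy function (bits). -/
noncomputable def hBin (t : ℝ) : ℝ :=
  -(t * Real.logb 2 t) - (1 - t) * Real.logb 2 (1 - t)

/-- `f_lower` from Theorem 1. -/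
noncomputable def fLower (t : ℝ) : ℝ := if t < 104 then t / 208 else 1 - 52 / t

/-- `f_upper` from Theorem 1. -/
noncomputable def fUpper (t : ℝ) : ℝ := min (3 * t) 1

open Real

section SymbolInfo

lemma mul_logb_div_le {q w a : ℝ} (hq : 0 ≤ q) (ha : 0 ≤ a) (haw : a ≤ w) (hac : q = 0 → a = 0) :
    a * logb 2 (a / (q * w)) ≤ a * logb 2 (1 / q) := by
  rcases ha.eq_or_lt with rfl | ha
  · simp
  have hq : 0 < q := hq.lt_of_ne fun h => ha.ne' (hac h.symm)
  have hw : 0 < w := ha.trans_le haw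
  have : a / (q * w) ≤ 1 / q := by
    rw [div_le_div_iff₀ (by positivity) hq]
    nlinarith
  gcongr
  norm_num

lemma sub_div_log_two_le {a b : ℝ} (ha : 0 ≤ a) (hb : 0 ≤ b) (hab : b = 0 → a = 0) :
    (a - b) / log 2 ≤ a * logb 2 (a / b) := by
  have hlog : 0 < log 2 := log_pos one_lt_two
  rcases ha.eq_or_lt with rfl | ha
  · simpa using div_nonpos_of_nonpos_of_nonneg (neg_nonpos.2 hb) hlog.le
  have hb : 0 < b := hb.lt_of_ne fun h => ha.ne' (hab h.symm)
  have h := mul_le_mul_of_nonneg_left (one_sub_inv_le_log_of_pos (div_pos ha hb)) ha.le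
  rw [logb, mul_div_assoc']
  gcongr
  calc a - b = a * (1 - (a / b)⁻¹) := by field_simp
    _ ≤ a * log (a / b) := h

lemma summable_mul_logb_div {ι : Type*} {q : ℝ} {a w : ι → ℝ} (hq : 0 ≤ q) (ha : ∀ y, 0 ≤ a y)
    (haw : ∀ y, a y ≤ w y) (hac : q = 0 → ∀ y, a y = 0) (hw : Summable w) :
    Summable fun y => a y * logb 2 (a y / (q * w y)) := by
  have hsa : Summable a := hw.of_nonneg_of_le ha haw
  have hlower : Summable fun y => (a y - q * w y) / log 2 :=
    (hsa.sub (hw.mul_left q)).div_const _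
  have hdiff : Summable fun y => a y * logb 2 (a y / (q * w y)) - (a y - q * w y) / log 2 := by
    refine ((hsa.mul_right (logb 2 (1 / q))).sub hlower).of_nonneg_of_le (fun y => ?_) fun y => ?_
    · refine sub_nonneg.2 (sub_div_log_two_le (ha y) (mul_nonneg hq ((ha y).trans (haw y)))
        fun h => ?_)
      rcases mul_eq_zero.1 h with h | h
      · exact hac h y
      · exact le_antisymm ((haw y).trans h.le) (ha y)
    · exact sub_le_sub_right (mul_logb_div_le hq (ha y) (haw y) fun h => hac h y) _
  simpa using hdiff.add hlower

theorem log_sum_inequality {ι : Type*} {a b : ι → ℝ} (ha : ∀ y, 0 ≤ a y) (hb : ∀ y, 0 ≤ b y)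
    (hab : ∀ y, b y = 0 → a y = 0) (hsa : Summable a) (hsb : Summable b)
    (hs : Summable fun y => a y * logb 2 (a y / b y)) :
    (∑' y, a y) * logb 2 ((∑' y, a y) / ∑' y, b y) ≤ ∑' y, a y * logb 2 (a y / b y) := by
  rcases (tsum_nonneg ha).eq_or_lt with hA | hA
  · have hzero : a = 0 := (hasSum_zero_iff_of_nonneg ha).1 (hA ▸ hsa.hasSum)
    simp [hzero]
  have hB : 0 < ∑' y, b y := by
    refine (tsum_nonneg hb).lt_of_ne fun hB => hA.ne ?_
    have hzero : b = 0 := (hasSum_zero_iff_of_nonneg hb).1 (hB ▸ hsb.hasSum)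
    simp [fun y => hab y (congrFun hzero y)]
  set c := (∑' y, a y) / ∑' y, b y
  have hc0 : 0 < c := div_pos hA hB
  have hterm : ∀ y, a y * logb 2 c + (a y - c * b y) / log 2 ≤ a y * logb 2 (a y / b y) := by
    intro y
    have h := sub_div_log_two_le (ha y) (mul_nonneg hc0.le (hb y))
      fun h => hab y ((mul_eq_zero_iff_left hc0.ne').1 h)
    rcases (ha y).eq_or_lt with hay | hay
    · simpa [← hay] using h
    have hby : b y ≠ 0 := fun h => hay.ne' (hab y h)
    rw [mul_comm c, ← div_div, logb_div (by positivity) hc0.ne', mul_sub, mul_comm (b y)] at h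
    linarith
  have hsum : HasSum (fun y => a y * logb 2 c + (a y - c * b y) / log 2)
      ((∑' y, a y) * logb 2 c + (∑' y, a y - c * ∑' y, b y) / log 2) :=
    (hsa.hasSum.mul_right _).add ((hsa.hasSum.sub (hsb.hasSum.mul_left c)).div_const _)
  have hcB : c * ∑' y, b y = ∑' y, a y := div_mul_cancel₀ _ hB.ne'
  simpa [hcB] using hasSum_le hterm hsum hs.hasSum

variable {κ : Type*} [Fintype κ] {q : κ → ℝ}

/-- The contribution to `I(X;Y)`, where `X` has law `q`, of a symbol of `Y` whose joint masses with
the values of `X` are `a`. -/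
noncomputable def symbolInfo (q a : κ → ℝ) : ℝ :=
  ∑ x, a x * logb 2 (a x / (q x * ∑ x', a x'))

lemma symbolInfo_nonneg {a : κ → ℝ} (hq : ∀ x, 0 ≤ q x) (hq1 : ∑ x, q x = 1)
    (ha : ∀ x, 0 ≤ a x) (hac : ∀ x, q x = 0 → a x = 0) : 0 ≤ symbolInfo q a := by
  have hle : ∀ x, a x ≤ ∑ x', a x' := fun x =>
    Finset.single_le_sum (fun x _ => ha x) (Finset.mem_univ x)
  calc (0 : ℝ) = ∑ x, (a x - q x * ∑ x', a x') / log 2 := by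
        rw [← Finset.sum_div, Finset.sum_sub_distrib, ← Finset.sum_mul, hq1]
        simp
    _ ≤ symbolInfo q a := Finset.sum_le_sum fun x _ =>
        sub_div_log_two_le (ha x) (mul_nonneg (hq x) ((ha x).trans (hle x))) fun h =>
          (mul_eq_zero.1 h).elim (hac x) fun h => le_antisymm ((hle x).trans h.le) (ha x)

lemma symbolInfo_le {a : κ → ℝ} (hq : ∀ x, 0 ≤ q x) (ha : ∀ x, 0 ≤ a x)
    (hac : ∀ x, q x = 0 → a x = 0) : symbolInfo q a ≤ ∑ x, a x * logb 2 (1 / q x) :=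
  Finset.sum_le_sum fun x _ => mul_logb_div_le (hq x) (ha x)
    (Finset.single_le_sum (fun x _ => ha x) (Finset.mem_univ x)) (hac x)

lemma symbolInfo_const_mul (c : ℝ) (a : κ → ℝ) :
    symbolInfo q (fun x => c * a x) = c * symbolInfo q a := by
  rcases eq_or_ne c 0 with rfl | hc
  · simp [symbolInfo]
  simp only [symbolInfo, ← Finset.mul_sum, mul_left_comm (q _) c, mul_div_mul_left _ _ hc,
    mul_assoc]

lemma symbolInfo_self (hq1 : ∑ x, q x = 1) : symbolInfo q q = 0 := by
  refine Finset.sum_eq_zero fun x _ => ?_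
  rcases eq_or_ne (q x) 0 with hx | hx <;> simp [hx, hq1]

variable {ι : Type*} {a : κ → ι → ℝ}

lemma summable_mul_logb_joint (hq : ∀ x, 0 ≤ q x) (ha : ∀ x y, 0 ≤ a x y)
    (hac : ∀ x, q x = 0 → ∀ y, a x y = 0) (hs : ∀ x, Summable (a x)) (x : κ) :
    Summable fun y => a x y * logb 2 (a x y / (q x * ∑ x', a x' y)) :=
  summable_mul_logb_div (hq x) (ha x)
    (fun y => Finset.single_le_sum (fun x' _ => ha x' y) (Finset.mem_univ x)) (hac x)
    (summable_sum fun x' _ => hs x')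

lemma summable_symbolInfo (hq : ∀ x, 0 ≤ q x) (ha : ∀ x y, 0 ≤ a x y)
    (hac : ∀ x, q x = 0 → ∀ y, a x y = 0) (hs : ∀ x, Summable (a x)) :
    Summable fun y => symbolInfo q fun x => a x y :=
  summable_sum fun x _ => summable_mul_logb_joint hq ha hac hs x

lemma symbolInfo_tsum_le (hq : ∀ x, 0 ≤ q x) (ha : ∀ x y, 0 ≤ a x y)
    (hac : ∀ x, q x = 0 → ∀ y, a x y = 0) (hs : ∀ x, Summable (a x)) :
    symbolInfo q (fun x => ∑' y, a x y) ≤ ∑' y, symbolInfo q fun x => a x y := by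
  have hsum := summable_mul_logb_joint hq ha hac hs
  have hw : Summable fun y => ∑ x, a x y := summable_sum fun x _ => hs x
  simp only [symbolInfo]
  rw [Summable.tsum_finsetSum fun x _ => hsum x, ← Summable.tsum_finsetSum fun x _ => hs x]
  refine Finset.sum_le_sum fun x _ => ?_
  rw [← tsum_mul_left]
  have hle : ∀ y, a x y ≤ ∑ x', a x' y := fun y =>
    Finset.single_le_sum (fun x' _ => ha x' y) (Finset.mem_univ x)
  exact log_sum_inequality (ha x) (fun y => mul_nonneg (hq x) ((ha x y).trans (hle y)))
    (fun y h => (mul_eq_zero.1 h).elim (fun h => hac x h y)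
      fun h => le_antisymm ((hle y).trans h.le) (ha x y)) (hs x) (hw.mul_left _) (hsum x)

lemma symbolInfo_add_le {a b : κ → ℝ} (hq : ∀ x, 0 ≤ q x) (ha : ∀ x, 0 ≤ a x) (hb : ∀ x, 0 ≤ b x)
    (hac : ∀ x, q x = 0 → a x = 0) (hbc : ∀ x, q x = 0 → b x = 0) :
    symbolInfo q (fun x => a x + b x) ≤ symbolInfo q a + symbolInfo q b := by
  have h := symbolInfo_tsum_le (a := fun x => ![a x, b x]) hq
    (fun x => Fin.forall_fin_two.2 ⟨ha x, hb x⟩)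
    (fun x hx => Fin.forall_fin_two.2 ⟨hac x hx, hbc x hx⟩) fun x => (hasSum_fintype _).summable
  simpa [tsum_fintype] using h

lemma symbolInfo_mix_le {v : κ → ℝ} (hq : ∀ x, 0 ≤ q x) (hq1 : ∑ x, q x = 1)
    (hv : ∀ x, 0 ≤ v x) (hvc : ∀ x, q x = 0 → v x = 0) {s t : ℝ} (hs : 0 ≤ s) (ht : 0 ≤ t) :
    symbolInfo q (fun x => s * q x + t * v x) ≤ t * symbolInfo q v := by
  have h := symbolInfo_add_le hq (fun x => mul_nonneg hs (hq x)) (fun x => mul_nonneg ht (hv x))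
    (fun x hx => by rw [hx, mul_zero]) (fun x hx => by rw [hvc x hx, mul_zero])
  rwa [symbolInfo_const_mul, symbolInfo_const_mul, symbolInfo_self hq1, mul_zero, zero_add] at h

end SymbolInfo

section Quantizers

variable {κ ι γ : Type*} {p : κ → ι → ℝ}

/-- The law of `X` when `(X, Y)` has joint pmf `p`. -/
noncomputable def marginal (p : κ → ι → ℝ) (x : κ) : ℝ := ∑' y, p x y

/-- The joint pmf of `(X, F(Y))` for a quantizer `F` with an arbitrary set `γ` of cells; it is
`quantJoint p F` when `γ = Fin M`. -/
noncomputable def cellMass [DecidableEq γ] (p : κ → ι → ℝ) (F : ι → γ) (x : κ) (i : γ) : ℝ :=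
  ∑' y, if F y = i then p x y else 0

/-- The contribution of the cell `i` to `I(X; F(Y))`. -/
noncomputable def cellInfo [Fintype κ] [DecidableEq γ] (p : κ → ι → ℝ) (F : ι → γ) (i : γ) : ℝ :=
  symbolInfo (marginal p) fun x => cellMass p F x i

lemma summable_ite {a : ι → ℝ} (ha : Summable a) (P : ι → Prop) [DecidablePred P] :
    Summable fun y => if P y then a y else 0 :=
  (ha.indicator {y | P y}).congr fun y => by simp [Set.indicator_apply]

lemma sum_mul_tsum_fiber [Fintype γ] [DecidableEq γ] {a : ι → ℝ} (ha : Summable a) (F : ι → γ)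
    (T : γ → ℝ) : ∑ i, T i * (∑' y, if F y = i then a y else 0) = ∑' y, T (F y) * a y := by
  simp_rw [← tsum_mul_left]
  rw [← Summable.tsum_finsetSum fun i _ => (summable_ite ha _).mul_left _]
  simp

namespace IsJointPMF

lemma summable (hp : IsJointPMF p) (x : κ) : Summable (p x) := hp.2.1.prod_factor x

lemma hasSum_marginal (hp : IsJointPMF p) (x : κ) : HasSum (p x) (marginal p x) :=
  (hp.summable x).hasSum

lemma marginal_nonneg (hp : IsJointPMF p) (x : κ) : 0 ≤ marginal p x := tsum_nonneg (hp.1 x)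

lemma eq_zero_of_marginal_eq_zero (hp : IsJointPMF p) (x : κ) (hx : marginal p x = 0) (y : ι) :
    p x y = 0 :=
  congrFun ((hasSum_zero_iff_of_nonneg (hp.1 x)).1 (hx ▸ hp.hasSum_marginal x)) y

lemma sum_cellMass [Fintype γ] [DecidableEq γ] (hp : IsJointPMF p) (F : ι → γ) (x : κ) :
    ∑ i, cellMass p F x i = marginal p x := by
  simpa [cellMass, marginal] using sum_mul_tsum_fiber (hp.summable x) F fun _ => 1

lemma cellMass_nonneg [DecidableEq γ] (hp : IsJointPMF p) (F : ι → γ) (x : κ) (i : γ) :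
    0 ≤ cellMass p F x i :=
  tsum_nonneg fun y => ite_nonneg (hp.1 x y) le_rfl

lemma cellMass_eq_zero [DecidableEq γ] (hp : IsJointPMF p) (F : ι → γ) (i : γ) (x : κ)
    (hx : marginal p x = 0) : cellMass p F x i = 0 := by
  simp [cellMass, hp.eq_zero_of_marginal_eq_zero x hx]

section Fintype

variable [Fintype κ]

lemma sum_marginal (hp : IsJointPMF p) : ∑ x, marginal p x = 1 := by
  simpa [marginal, tsum_fintype] using hp.2.2

lemma miBits_eq_tsum_symbolInfo (hp : IsJointPMF p) :
    miBits p = ∑' y, symbolInfo (marginal p) fun x => p x y := by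
  have hs := summable_mul_logb_joint hp.marginal_nonneg hp.1 hp.eq_zero_of_marginal_eq_zero
    hp.summable
  simp only [symbolInfo]
  rw [Summable.tsum_finsetSum fun x _ => hs x]
  simp only [miBits, marginal, tsum_fintype]

lemma summable_symbolInfo (hp : IsJointPMF p) :
    Summable fun y => symbolInfo (marginal p) fun x => p x y :=
  _root_.summable_symbolInfo hp.marginal_nonneg hp.1 hp.eq_zero_of_marginal_eq_zero hp.summable

lemma symbolInfo_nonneg (hp : IsJointPMF p) (y : ι) :
    0 ≤ symbolInfo (marginal p) fun x => p x y :=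
  _root_.symbolInfo_nonneg hp.marginal_nonneg hp.sum_marginal (fun x => hp.1 x y)
    fun x hx => hp.eq_zero_of_marginal_eq_zero x hx y

lemma miBits_le_entropy (hp : IsJointPMF p) :
    miBits p ≤ ∑ x, marginal p x * logb 2 (1 / marginal p x) := by
  have hs : ∀ x, Summable fun y => p x y * logb 2 (1 / marginal p x) := fun x =>
    (hp.summable x).mul_right _
  calc miBits p = ∑' y, symbolInfo (marginal p) fun x => p x y := hp.miBits_eq_tsum_symbolInfo
    _ ≤ ∑' y, ∑ x, p x y * logb 2 (1 / marginal p x) :=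
      hp.summable_symbolInfo.tsum_le_tsum (fun y => symbolInfo_le hp.marginal_nonneg
        (fun x => hp.1 x y) fun x hx => hp.eq_zero_of_marginal_eq_zero x hx y)
        (summable_sum fun x _ => hs x)
    _ = ∑ x, marginal p x * logb 2 (1 / marginal p x) := by
      rw [Summable.tsum_finsetSum fun x _ => hs x]
      simp only [tsum_mul_right, marginal]

variable [DecidableEq γ]

lemma cellInfo_nonneg (hp : IsJointPMF p) (F : ι → γ) (i : γ) : 0 ≤ cellInfo p F i :=
  _root_.symbolInfo_nonneg hp.marginal_nonneg hp.sum_marginal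
    (fun x => hp.cellMass_nonneg F x i) (hp.cellMass_eq_zero F i)

lemma cellInfo_le_tsum (hp : IsJointPMF p) (F : ι → γ) (i : γ) :
    cellInfo p F i ≤ ∑' y, if F y = i then symbolInfo (marginal p) fun x => p x y else 0 := by
  refine (symbolInfo_tsum_le hp.marginal_nonneg (fun x y => ite_nonneg (hp.1 x y) le_rfl)
    (fun x hx y => by simp [hp.eq_zero_of_marginal_eq_zero x hx])
    fun x => summable_ite (hp.summable x) _).trans_eq (tsum_congr fun y => ?_)
  split_ifs <;> simp [symbolInfo]

variable [Fintype γ]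

lemma sum_cellInfo_le_miBits (hp : IsJointPMF p) (F : ι → γ) :
    ∑ i, cellInfo p F i ≤ miBits p :=
  calc ∑ i, cellInfo p F i
      ≤ ∑ i, ∑' y, if F y = i then symbolInfo (marginal p) fun x => p x y else 0 :=
        Finset.sum_le_sum fun i _ => hp.cellInfo_le_tsum F i
    _ = miBits p := by
        simpa [hp.miBits_eq_tsum_symbolInfo] using
          sum_mul_tsum_fiber hp.summable_symbolInfo F fun _ => 1

lemma miBits_cellMass (hp : IsJointPMF p) (F : ι → γ) :
    miBits (cellMass p F) = ∑ i, cellInfo p F i := by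
  simp only [miBits, tsum_fintype, cellInfo, symbolInfo, hp.sum_cellMass]
  exact Finset.sum_comm

lemma miBits_quantJoint (hp : IsJointPMF p) {M : ℕ} (f : ι → Fin M) :
    miBits (quantJoint p f) = ∑ m, cellInfo p f m :=
  hp.miBits_cellMass f

end Fintype

section Finite

variable [Finite κ]

lemma miBits_nonneg (hp : IsJointPMF p) : 0 ≤ miBits p := by
  cases nonempty_fintype κ
  exact hp.miBits_eq_tsum_symbolInfo ▸ tsum_nonneg hp.symbolInfo_nonneg

lemma miBits_quantJoint_le_miBits (hp : IsJointPMF p) {M : ℕ} (f : ι → Fin M) :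
    miBits (quantJoint p f) ≤ miBits p := by
  cases nonempty_fintype κ
  exact (hp.miBits_quantJoint f).trans_le (hp.sum_cellInfo_le_miBits f)

lemma quantMI_le_miBits (hp : IsJointPMF p) (M : ℕ) : quantMI p M ≤ miBits p :=
  Real.iSup_le hp.miBits_quantJoint_le_miBits hp.miBits_nonneg

lemma miBits_quantJoint_le_quantMI (hp : IsJointPMF p) {M : ℕ} (f : ι → Fin M) :
    miBits (quantJoint p f) ≤ quantMI p M :=
  le_ciSup (f := fun f : ι → Fin M => miBits (quantJoint p f))
    ⟨miBits p, Set.forall_mem_range.2 hp.miBits_quantJoint_le_miBits⟩ f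

lemma quantMI_nonneg (hp : IsJointPMF p) (M : ℕ) : 0 ≤ quantMI p M := by
  cases nonempty_fintype κ
  refine Real.iSup_nonneg fun f => ?_
  rw [hp.miBits_quantJoint f]
  exact Finset.sum_nonneg fun m _ => hp.cellInfo_nonneg f m

lemma quantMI_one (hp : IsJointPMF p) : quantMI p 1 = 0 := by
  cases nonempty_fintype κ
  refine le_antisymm (Real.iSup_le (fun f => ?_) le_rfl) (hp.quantMI_nonneg 1)
  have hmass : (fun x => cellMass p f x 0) = marginal p :=
    funext fun x => by rw [← hp.sum_cellMass f x, Fin.sum_univ_one]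
  rw [hp.miBits_quantJoint f, Fin.sum_univ_one, cellInfo, hmass, symbolInfo_self hp.sum_marginal]

end Finite

/-- Keep the cells in `T` and merge all the others. -/
lemma sum_cellInfo_le_quantMI [Fintype κ] [DecidableEq γ] (hp : IsJointPMF p)
    (F : ι → γ) (T : Finset γ) {M : ℕ} (hT : T.card + 1 ≤ M) :
    ∑ i ∈ T, cellInfo p F i ≤ quantMI p M := by
  obtain ⟨e, he⟩ : ∃ e : γ → Fin M, ∀ i ∈ T, ∀ j, e j = e i ↔ j = i := by
    obtain ⟨g⟩ : Nonempty (Option T ↪ Fin M) :=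
      Function.Embedding.nonempty_of_card_le (by simpa using hT)
    refine ⟨fun j => g (if h : j ∈ T then some ⟨j, h⟩ else none), fun i hi j => ?_⟩
    by_cases hj : j ∈ T
    · simp [hi, hj]
    · simpa [hi, hj] using fun h : j = i => hj (h ▸ hi)
  have hcell : ∀ i ∈ T, cellInfo p F i = cellInfo p (fun y => e (F y)) (e i) := fun i hi => by
    simp only [cellInfo, cellMass, he i hi]
  calc ∑ i ∈ T, cellInfo p F i = ∑ i ∈ T, cellInfo p (fun y => e (F y)) (e i) :=
        Finset.sum_congr rfl hcell
    _ = ∑ m ∈ T.image e, cellInfo p (fun y => e (F y)) m :=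
        (Finset.sum_image fun i _ j hj h => (he j hj i).1 h).symm
    _ ≤ ∑ m, cellInfo p (fun y => e (F y)) m :=
        Finset.sum_le_univ_sum_of_nonneg fun m => hp.cellInfo_nonneg _ m
    _ = miBits (quantJoint p fun y => e (F y)) := (hp.miBits_quantJoint _).symm
    _ ≤ quantMI p M := hp.miBits_quantJoint_le_quantMI _

end IsJointPMF

end Quantizers

section LowerBound

lemma exists_card_nsmul_sum_le {ι M : Type*} [AddCommMonoid M] [LinearOrder M]
    [IsOrderedAddMonoid M] (v : ι → M) {S : Finset ι} {k : ℕ} (hk : k ≤ S.card) :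
    ∃ T ⊆ S, T.card = k ∧ k • ∑ i ∈ S, v i ≤ S.card • ∑ i ∈ T, v i := by
  classical
  obtain ⟨d, hd⟩ := Nat.exists_eq_add_of_le hk
  induction d generalizing S with
  | zero => exact ⟨S, subset_rfl, hd, by rw [hd, add_zero]⟩
  | succ d ih =>
    obtain ⟨i, hi, hmin⟩ := S.exists_min_image v (Finset.card_pos.1 (by omega))
    have hcard : (S.erase i).card + 1 = S.card := Finset.card_erase_add_one hi
    obtain ⟨T, hT, hTk, hle⟩ := ih (S := S.erase i) (by omega) (by omega)
    refine ⟨T, hT.trans (Finset.erase_subset _ _), hTk, ?_⟩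
    have hvi : k • v i ≤ ∑ j ∈ T, v j :=
      hTk ▸ Finset.card_nsmul_le_sum T v _ fun j hj => hmin j (Finset.mem_of_mem_erase (hT hj))
    calc k • ∑ j ∈ S, v j = k • ∑ j ∈ S.erase i, v j + k • v i := by
          rw [← Finset.sum_erase_add S v hi, nsmul_add]
      _ ≤ (S.erase i).card • ∑ j ∈ T, v j + ∑ j ∈ T, v j := add_le_add hle hvi
      _ = S.card • ∑ j ∈ T, v j := by rw [← hcard, succ_nsmul]

lemma exists_mul_tsum_le_tsum_mul {ι : Type*} {w b : ι → ℝ} (hw : ∀ y, 0 ≤ w y)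
    (hwb : ∀ y, w y = 0 → b y = 0) (hsw : Summable w) (hsb : Summable b) (hpos : 0 < ∑' y, w y) :
    ∃ y, 0 < w y ∧ b y * ∑' y, w y ≤ (∑' y, b y) * w y := by
  by_contra! h
  obtain ⟨y₀, hy₀⟩ : ∃ y, 0 < w y := by
    by_contra! hle
    exact hpos.ne' (by simp [fun y => le_antisymm (hle y) (hw y)])
  have hle : ∀ y, (∑' y, b y) * w y ≤ b y * ∑' y, w y := fun y => by
    rcases (hw y).eq_or_lt with hy | hy
    · simp [← hy, hwb y hy.symm]
    · exact (h y hy).le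
  have := Summable.tsum_lt_tsum hle (h y₀ hy₀) (hsw.mul_left _) (hsb.mul_right _)
  simp [tsum_mul_left, tsum_mul_right] at this

section Merging

lemma funext_of_sum_eq {M : Type*} [AddCommGroup M] {u v : Fin 2 → M} {i : Fin 2}
    (hi : u i = v i) (hsum : ∑ x, u x = ∑ x, v x) : u = v := by
  rw [Fin.sum_univ_two, Fin.sum_univ_two] at hsum
  funext x
  fin_cases i <;> fin_cases x <;> simp_all

variable {q : Fin 2 → ℝ}

/-- The nearer posterior is a mixture of the prior and the farther one. -/
lemma mul_symbolInfo_le_mul_symbolInfo {u v : Fin 2 → ℝ} (hq : ∀ x, 0 ≤ q x)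
    (hq1 : ∑ x, q x = 1) (hv : ∀ x, 0 ≤ v x) (hvc : ∀ x, q x = 0 → v x = 0) (hw : 0 < ∑ x, u x)
    (hW : 0 < ∑ x, v x) {i : Fin 2} (hqu : q i * ∑ x, u x ≤ u i)
    (huv : u i * ∑ x, v x ≤ v i * ∑ x, u x) :
    (∑ x, v x) * symbolInfo q u ≤ (∑ x, u x) * symbolInfo q v := by
  set w := ∑ x, u x
  set W := ∑ x, v x
  have hqv : q i * W ≤ v i := by
    refine le_of_mul_le_mul_right ?_ hw
    nlinarith
  set t := (u i - q i * w) / (v i - q i * W)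
  have ht : 0 ≤ t := div_nonneg (sub_nonneg.2 hqu) (sub_nonneg.2 hqv)
  have htW : t * W ≤ w := by
    refine (div_mul_eq_mul_div _ _ _).trans_le (div_le_of_le_mul₀ (sub_nonneg.2 hqv) hw.le ?_)
    linarith
  have hcancel : t * (v i - q i * W) = u i - q i * w := by
    rcases (sub_nonneg.2 hqv).eq_or_lt with h | h
    · rw [← h, mul_zero]
      nlinarith
    · exact div_mul_cancel₀ _ h.ne'
  have hmix : u = fun x => (w - t * W) * q x + t * v x := by
    refine funext_of_sum_eq (i := i) (by linarith) ?_
    rw [Finset.sum_add_distrib, ← Finset.mul_sum, ← Finset.mul_sum, hq1]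
    ring
  have hle : symbolInfo q u ≤ t * symbolInfo q v := by
    rw [hmix]
    exact symbolInfo_mix_le hq hq1 hv hvc (sub_nonneg.2 htW) ht
  nlinarith [symbolInfo_nonneg hq hq1 hv hvc]

lemma mul_sum_tsum_le_symbolInfo {ι : Type*} {a : Fin 2 → ι → ℝ} (hq : ∀ x, 0 ≤ q x)
    (hq1 : ∑ x, q x = 1) (ha : ∀ x y, 0 ≤ a x y) (hac : ∀ x, q x = 0 → ∀ y, a x y = 0)
    (hs : ∀ x, Summable (a x)) {i : Fin 2}
    (hside : ∀ y, q i * ∑ x, a x y ≤ a i y) {T : ℝ}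
    (hT : ∀ y, T * ∑ x, a x y ≤ symbolInfo q fun x => a x y) :
    T * ∑ x, ∑' y, a x y ≤ symbolInfo q fun x => ∑' y, a x y := by
  have hv : ∀ x, 0 ≤ ∑' y, a x y := fun x => tsum_nonneg (ha x)
  have hvc : ∀ x, q x = 0 → ∑' y, a x y = 0 := fun x hx => by simp [hac x hx]
  have htotal : ∑ x, ∑' y, a x y = ∑' y, ∑ x, a x y :=
    (Summable.tsum_finsetSum fun x _ => hs x).symm
  have hw : ∀ y, 0 ≤ ∑ x, a x y := fun y => Finset.sum_nonneg fun x _ => ha x y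
  rcases (Finset.sum_nonneg fun x _ => hv x).eq_or_lt with hW | hW
  · rw [← hW, mul_zero]
    exact symbolInfo_nonneg hq hq1 hv hvc
  obtain ⟨y, hy, hle⟩ := exists_mul_tsum_le_tsum_mul hw
    (fun y h => (Finset.sum_eq_zero_iff_of_nonneg fun x _ => ha x y).1 h i (Finset.mem_univ i))
    (summable_sum fun x _ => hs x) (hs i) (htotal ▸ hW)
  have hmono := mul_symbolInfo_le_mul_symbolInfo hq hq1 hv hvc hy hW (hside y) (htotal ▸ hle)
  refine le_of_mul_le_mul_left ?_ hy
  calc (∑ x, a x y) * (T * ∑ x, ∑' y, a x y)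
      = (∑ x, ∑' y, a x y) * (T * ∑ x, a x y) := by ring
    _ ≤ (∑ x, ∑' y, a x y) * symbolInfo q fun x => a x y := by gcongr; exact hT y
    _ ≤ _ := hmono

end Merging

lemma exists_mul_sum_le {κ : Type*} [Fintype κ] {q : κ → ℝ} (hq1 : ∑ x, q x = 1) (a : κ → ℝ) :
    ∃ x, q x * ∑ x', a x' ≤ a x := by
  by_contra! h
  have hne : (Finset.univ : Finset κ).Nonempty := Finset.nonempty_of_sum_ne_zero (hq1 ▸ one_ne_zero)
  have := Finset.sum_lt_sum_of_nonempty hne fun x _ => h x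
  rw [← Finset.sum_mul, hq1, one_mul] at this
  exact lt_irrefl _ this

lemma IsJointPMF.exists_tsum_le_sum_cellInfo {ι γ : Type*} [Fintype γ] [DecidableEq γ]
    {p : Fin 2 → ι → ℝ} (hp : IsJointPMF p) {J : ι → γ} {T : γ → ℝ}
    (hT : ∀ y, T (J y) * ∑ x, p x y ≤ symbolInfo (marginal p) fun x => p x y) :
    ∃ F : ι → Fin 2 × γ, ∑' y, T (J y) * ∑ x, p x y ≤ ∑ i, cellInfo p F i := by
  choose side hside using fun y => exists_mul_sum_le hp.sum_marginal fun x => p x y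
  let F : ι → Fin 2 × γ := fun y => (side y, J y)
  have hcell : ∀ i, T i.2 * ∑ x, cellMass p F x i ≤ cellInfo p F i := by
    intro i
    refine mul_sum_tsum_le_symbolInfo (i := i.1) hp.marginal_nonneg hp.sum_marginal
      (fun x y => ite_nonneg (hp.1 x y) le_rfl)
      (fun x hx y => by simp [hp.eq_zero_of_marginal_eq_zero x hx])
      (fun x => summable_ite (hp.summable x) _) (fun y => ?_) fun y => ?_
    · rcases eq_or_ne (F y) i with rfl | hy
      · simpa using hside y
      · simp [hy]
    · rcases eq_or_ne (F y) i with rfl | hy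
      · simpa using hT y
      · simp [hy, symbolInfo]
  have hmass : ∀ i, ∑ x, cellMass p F x i = ∑' y, if F y = i then ∑ x, p x y else 0 := fun i => by
    simp only [cellMass]
    rw [← Summable.tsum_finsetSum fun x _ => summable_ite (hp.summable x) _]
    exact tsum_congr fun y => by split_ifs <;> simp
  refine ⟨F, ?_⟩
  calc ∑' y, T (J y) * ∑ x, p x y = ∑ i : Fin 2 × γ, T i.2 * ∑ x, cellMass p F x i := by
        simp only [hmass]
        exact (sum_mul_tsum_fiber (summable_sum fun x _ => hp.summable x) F fun i => T i.2).symm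
    _ ≤ ∑ i, cellInfo p F i := Finset.sum_le_sum fun i _ => hcell i

/-- The level `j` of the geometric grid, of ratio `1 + 1/n`, for the information per unit of
mass. -/
noncomputable def geometricLevel (β : ℝ) (n j : ℕ) : ℝ := β * ((1 + 1 / n) ^ j - 1)

lemma geometricLevel_nonneg {β : ℝ} (hβ : 0 ≤ β) (n j : ℕ) : 0 ≤ geometricLevel β n j :=
  mul_nonneg hβ (sub_nonneg.2 (one_le_pow₀ (le_add_of_nonneg_right (by positivity))))

lemma exists_geometricLevel_le {β v : ℝ} (hβ : 0 < β) {n K : ℕ} (hn : 0 < n) (hv : 0 ≤ v)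
    (hvK : v < geometricLevel β n K) :
    ∃ j : Fin K, geometricLevel β n j ≤ v ∧ (n * v - β) / (n + 1) ≤ geometricLevel β n j := by
  have hn : (0 : ℝ) < n := Nat.cast_pos.2 hn
  obtain ⟨j, hj, hj'⟩ := exists_nat_pow_near (x := 1 + v / β) (y := 1 + 1 / (n : ℝ))
    (le_add_of_nonneg_right (by positivity)) (lt_add_of_pos_right 1 (by positivity))
  have hle : geometricLevel β n j ≤ v := by
    rw [geometricLevel, ← le_div_iff₀' hβ]
    linarith
  have hjK : j < K := by
    by_contra! hKj
    refine (hvK.trans_le ?_).not_ge hle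
    rw [geometricLevel, geometricLevel]
    gcongr
    exact le_add_of_nonneg_right (by positivity)
  refine ⟨⟨j, hjK⟩, hle, ?_⟩
  have hupper : β + v ≤ β * (1 + 1 / (n : ℝ)) ^ j * ((n + 1) / n) := by
    calc β + v = β * (1 + v / β) := by field_simp
      _ ≤ β * (1 + 1 / (n : ℝ)) ^ (j + 1) := by gcongr
      _ = β * (1 + 1 / (n : ℝ)) ^ j * ((n + 1) / n) := by
        rw [pow_succ, mul_assoc]
        congr 2
        field_simp
  rw [mul_div_assoc', le_div_iff₀ hn] at hupper
  rw [div_le_iff₀ (by positivity), geometricLevel]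
  linarith

lemma IsJointPMF.miBits_le_of_logb_inv_marginal_le {ι κ : Type*} [Finite κ] {p : κ → ι → ℝ}
    (hp : IsJointPMF p) {R : ℝ} (hR : ∀ x, logb 2 (1 / marginal p x) ≤ R) : miBits p ≤ R := by
  cases nonempty_fintype κ
  calc miBits p ≤ ∑ x, marginal p x * logb 2 (1 / marginal p x) := hp.miBits_le_entropy
    _ ≤ ∑ x, marginal p x * R := Finset.sum_le_sum fun x _ =>
        mul_le_mul_of_nonneg_left (hR x) (hp.marginal_nonneg x)
    _ = R := by rw [← Finset.sum_mul, hp.sum_marginal, one_mul]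

lemma IsJointPMF.exists_le_sum_cellInfo {ι : Type*} {p : Fin 2 → ι → ℝ} (hp : IsJointPMF p)
    {β R : ℝ} (hβ : 0 < β) {n K : ℕ} (hn : 0 < n) (hR : ∀ x, logb 2 (1 / marginal p x) ≤ R)
    (hK : R < geometricLevel β n K) :
    ∃ F : ι → Fin 2 × Fin K, (n * miBits p - β) / (n + 1) ≤ ∑ i, cellInfo p F i := by
  set info : ι → ℝ := fun y => symbolInfo (marginal p) fun x => p x y
  set w : ι → ℝ := fun y => ∑ x, p x y
  have hw : ∀ y, 0 ≤ w y := fun y => Finset.sum_nonneg fun x _ => hp.1 x y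
  have hinfo_le : ∀ y, info y ≤ R * w y := fun y => by
    refine (symbolInfo_le hp.marginal_nonneg (fun x => hp.1 x y)
      fun x hx => hp.eq_zero_of_marginal_eq_zero x hx y).trans ?_
    rw [mul_comm, Finset.sum_mul]
    exact Finset.sum_le_sum fun x _ => mul_le_mul_of_nonneg_left (hR x) (hp.1 x y)
  have hR0 : 0 ≤ R := hp.miBits_nonneg.trans (hp.miBits_le_of_logb_inv_marginal_le hR)
  have hdiv : ∀ y, info y / w y * w y = info y := fun y => by
    rcases eq_or_ne (w y) 0 with h | h
    · have := hinfo_le y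
      rw [h, mul_zero] at this ⊢
      exact (this.antisymm (hp.symbolInfo_nonneg y)).symm
    · exact div_mul_cancel₀ _ h
  choose J hJ hJ' using fun y => exists_geometricLevel_le hβ hn
    (div_nonneg (hp.symbolInfo_nonneg y) (hw y))
    ((div_le_of_le_mul₀ (hw y) hR0 (hinfo_le y)).trans_lt hK)
  have hlevel : ∀ y, geometricLevel β n (J y) * w y ≤ info y := fun y =>
    (mul_le_mul_of_nonneg_right (hJ y) (hw y)).trans_eq (hdiv y)
  obtain ⟨F, hF⟩ := hp.exists_tsum_le_sum_cellInfo (J := J)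
    (T := fun j => geometricLevel β n j) hlevel
  refine ⟨F, le_trans ?_ hF⟩
  have hlower : HasSum (fun y => (n * info y - β * w y) / (n + 1))
      ((n * miBits p - β) / (n + 1)) := by
    have hw1 : HasSum w 1 := hp.sum_marginal ▸ hasSum_sum fun x _ => hp.hasSum_marginal x
    simpa only [hp.miBits_eq_tsum_symbolInfo, mul_one] using
      ((hp.summable_symbolInfo.hasSum.mul_left (n : ℝ)).sub (hw1.mul_left β)).div_const _
  refine hasSum_le (fun y => ?_) hlower (hp.summable_symbolInfo.of_nonneg_of_le
    (fun y => mul_nonneg (geometricLevel_nonneg hβ.le n _) (hw y)) hlevel).hasSum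
  rw [← hdiv y]
  refine le_trans (le_of_eq ?_) (mul_le_mul_of_nonneg_right (hJ' y) (hw y))
  ring

lemma binEntropy_mul_log_inv_le_two {q : ℝ} (hq : 0 ≤ q) (hq1 : q ≤ 1) :
    binEntropy q * log q⁻¹ ≤ 2 := by
  rcases hq.eq_or_lt with rfl | hq
  · simp
  set z := log q⁻¹ with hz_def
  have hz : 0 ≤ z := log_nonneg ((one_le_inv₀ hq).2 hq1)
  have htail : (1 - q) * log (1 - q)⁻¹ ≤ q := by
    rcases hq1.eq_or_lt with rfl | hq1
    · simp
    have hq1 : 0 < 1 - q := sub_pos.2 hq1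
    calc (1 - q) * log (1 - q)⁻¹ ≤ (1 - q) * ((1 - q)⁻¹ - 1) := by
          gcongr
          exact log_le_sub_one_of_pos (inv_pos.2 hq1)
      _ = q := by field_simp; ring
  have hexp : q * (1 + z + z ^ 2 / 2) ≤ 1 := by
    calc q * (1 + z + z ^ 2 / 2) ≤ q * exp z := by gcongr; exact quadratic_le_exp_of_nonneg hz
      _ = 1 := by rw [exp_log (inv_pos.2 hq), mul_inv_cancel₀ hq.ne']
  calc binEntropy q * z ≤ (q * z + q) * z := by
        rw [binEntropy]
        gcongr
    _ ≤ 2 := by nlinarith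

lemma IsJointPMF.logb_inv_marginal_le {ι : Type*} {p : Fin 2 → ι → ℝ} (hp : IsJointPMF p) {β : ℝ}
    (hβ : 0 < β) (hI : β ≤ miBits p) (x : Fin 2) : logb 2 (1 / marginal p x) ≤ 5 / β := by
  have hsum := hp.sum_marginal
  have hx1 : marginal p x ≤ 1 := hsum ▸
    Finset.single_le_sum (fun x _ => hp.marginal_nonneg x) (Finset.mem_univ x)
  have hlog : 0 ≤ log (marginal p x)⁻¹ := by
    rw [log_inv, neg_nonneg]
    exact log_nonpos (hp.marginal_nonneg x) hx1
  have hentropy : miBits p ≤ binEntropy (marginal p x) / log 2 := by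
    refine hp.miBits_le_entropy.trans_eq ?_
    rw [Fin.sum_univ_two] at hsum
    have h0 : 1 - marginal p 0 = marginal p 1 := by linarith
    have h1 : 1 - marginal p 1 = marginal p 0 := by linarith
    fin_cases x <;> simp [logb, binEntropy, h0, h1] <;> ring
  have hlog2 := log_two_gt_d9
  rw [le_div_iff₀ hβ, one_div, logb, div_mul_eq_mul_div, div_le_iff₀ (by linarith)]
  have hmul := mul_le_mul_of_nonneg_right (hI.trans hentropy) hlog
  rw [div_mul_eq_mul_div, le_div_iff₀ (by linarith)] at hmul
  have hH := binEntropy_mul_log_inv_le_two (hp.marginal_nonneg x) hx1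
  nlinarith

lemma five_div_lt_geometricLevel {β : ℝ} (hβ : 0 < β) {n A : ℕ} (hn : 0 < n)
    (hA : 5 * max (logb 2 (1 / β)) 1 ≤ A) : 5 / β < geometricLevel β n (n * A) := by
  set B : ℝ := 2 ^ max (logb 2 (1 / β)) 1 with hB
  have hBβ : 1 / β ≤ B := by
    rw [hB, ← logb_le_iff_le_rpow one_lt_two (by positivity)]
    exact le_max_left _ _
  have hB2 : 2 ≤ B := by
    simpa only [rpow_one] using
      rpow_le_rpow_of_exponent_le one_le_two (le_max_right (logb 2 (1 / β)) 1)
  have hBA : B ^ 5 ≤ 2 ^ A := by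
    rw [hB, ← rpow_natCast, ← rpow_mul zero_le_two, ← rpow_natCast, mul_comm]
    exact rpow_le_rpow_of_exponent_le one_le_two (by simpa using hA)
  have hpow : (2 : ℝ) ^ A ≤ (1 + 1 / (n : ℝ)) ^ (n * A) := by
    rw [pow_mul]
    gcongr
    calc (2 : ℝ) = 1 + n * (1 / n) := by field_simp; norm_num
      _ ≤ (1 + 1 / (n : ℝ)) ^ n :=
        one_add_mul_le_pow ((by norm_num : (-2 : ℝ) ≤ 0).trans (by positivity)) n
  have hB5 : 5 * B ^ 2 + 1 < B ^ 5 := by nlinarith [pow_le_pow_left₀ zero_le_two hB2 3, sq_nonneg B]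
  have hβB : 5 / β ≤ β * (5 * B ^ 2) := by
    have hβB1 : 1 ≤ β * B := (div_le_iff₀' hβ).1 hBβ
    rw [div_le_iff₀ hβ]
    nlinarith
  calc 5 / β ≤ β * (5 * B ^ 2) := hβB
    _ < geometricLevel β n (n * A) := by
      rw [geometricLevel]
      gcongr
      linarith

lemma IsJointPMF.le_quantMI {ι : Type*} {p : Fin 2 → ι → ℝ} (hp : IsJointPMF p) {β : ℝ}
    (hβ : 0 < β) (hI : β ≤ miBits p) {n : ℕ} (hn : 0 < n) (k : ℕ) :
    β * (1 - 2 / (n + 1)) * min 1 (k / (12 * n * max (logb 2 (1 / β)) 1)) ≤ quantMI p (k + 1) := by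
  set L := max (logb 2 (1 / β)) 1
  obtain ⟨A, hA0, hA, hA'⟩ : ∃ A : ℕ, 0 < A ∧ 5 * L ≤ A ∧ A ≤ 6 * L := by
    have hL : 1 ≤ L := le_max_right _ _
    have := Nat.ceil_lt_add_one (a := 5 * L) (by linarith)
    exact ⟨⌈5 * L⌉₊, Nat.ceil_pos.2 (by linarith), Nat.le_ceil _, by linarith⟩
  obtain ⟨F, hF⟩ := hp.exists_le_sum_cellInfo hβ hn (hp.logb_inv_marginal_le hβ hI)
    (five_div_lt_geometricLevel hβ hn hA)
  have hcard : (Finset.univ : Finset (Fin 2 × Fin (n * A))).card = 2 * (n * A) := by simp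
  obtain ⟨T, -, hTcard, hT⟩ := exists_card_nsmul_sum_le (cellInfo p F)
    (hcard ▸ min_le_left (2 * (n * A)) k)
  rw [hcard, nsmul_eq_mul, nsmul_eq_mul] at hT
  set N := 2 * (n * A) with hN_def
  have hN : (0 : ℝ) < N := by positivity
  have hfraction : min 1 (k / (12 * n * L)) ≤ ((min N k : ℕ) : ℝ) / N := by
    have hNL : (N : ℝ) ≤ 12 * n * L := by
      rw [hN_def]
      push_cast
      nlinarith [n.cast_nonneg (α := ℝ)]
    rw [Nat.cast_min, ← min_div_div_right hN.le, div_self hN.ne']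
    gcongr
  calc β * (1 - 2 / (n + 1)) * min 1 (k / (12 * n * L))
      = min 1 (k / (12 * n * L)) * ((n * β - β) / (n + 1)) := by
        rw [mul_comm]
        congr 1
        field_simp
        ring
    _ ≤ ((min N k : ℕ) : ℝ) / N * ∑ i, cellInfo p F i := by
      refine mul_le_mul hfraction (le_trans ?_ hF) ?_ (by positivity)
      · gcongr
      · refine div_nonneg (sub_nonneg.2 (le_mul_of_one_le_left hβ.le ?_)) (by positivity)
        exact_mod_cast hn
    _ ≤ ∑ i ∈ T, cellInfo p F i := by rwa [div_mul_eq_mul_div, div_le_iff₀' hN]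
    _ ≤ quantMI p (k + 1) := hp.sum_cellInfo_le_quantMI F T (by omega)

lemma exists_fLower_le {t : ℝ} (ht : 0 ≤ t) :
    ∃ n : ℕ, 0 < n ∧ fLower t ≤ (1 - 2 / (n + 1)) * min 1 (t / (12 * n)) := by
  rcases lt_or_ge t 104 with hlt | hge
  · refine ⟨3, by norm_num, ?_⟩
    rw [fLower, if_pos hlt]
    rcases min_cases 1 (t / (12 * (3 : ℕ))) with ⟨h, -⟩ | ⟨h, -⟩ <;> rw [h] <;> norm_num <;>
      linarith
  · have hn : t / 12 < ⌊t / 12⌋₊ + 1 := Nat.lt_floor_add_one _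
    have hn' : (⌊t / 12⌋₊ : ℝ) ≤ t / 12 := Nat.floor_le (by positivity)
    have hn0 : (0 : ℝ) < ⌊t / 12⌋₊ := by linarith
    refine ⟨⌊t / 12⌋₊, Nat.cast_pos.1 hn0, ?_⟩
    have hmin : 1 ≤ t / (12 * ⌊t / 12⌋₊) := by
      rw [le_div_iff₀ (by positivity)]
      linarith
    have hdiv : 2 / (⌊t / 12⌋₊ + 1 : ℝ) ≤ 52 / t := by
      rw [div_le_div_iff₀ (by positivity) (by linarith)]
      linarith
    rw [fLower, if_neg hge.not_gt, min_eq_left hmin]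
    linarith

lemma IsJointPMF.mul_fLower_le_quantMI {ι : Type*} {p : Fin 2 → ι → ℝ} (hp : IsJointPMF p) {β : ℝ}
    (hβ : 0 < β) (hI : β ≤ miBits p) (k : ℕ) :
    β * fLower (k / max (logb 2 (1 / β)) 1) ≤ quantMI p (k + 1) := by
  set L := max (logb 2 (1 / β)) 1
  obtain ⟨n, hn, hle⟩ := exists_fLower_le (t := k / L) (by positivity)
  refine le_trans ?_ (hp.le_quantMI hβ hI hn k)
  rw [mul_assoc, mul_comm (12 * (n : ℝ)), ← div_div]
  gcongr

end LowerBound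

section BiasedBit

/-- `1 - h((1 + s) / 2)` in units of `1 / (2 log 2)` bits: the information that a symbol of `Y`
carries, per unit of mass, on a uniform bit whose posterior is `(1 ± s) / 2`. -/
noncomputable def biasInfo (s : ℝ) : ℝ := (1 + s) * log (1 + s) + (1 - s) * log (1 - s)

lemma hasSum_biasInfo {s : ℝ} (hs : |s| < 1) :
    HasSum (fun k : ℕ => (s ^ 2) ^ (k + 1) / ((2 * k + 1) * (k + 1))) (biasInfo s) := by
  obtain ⟨hs0, hs1⟩ := abs_lt.1 hs
  have hs2 : |s ^ 2| < 1 := by rwa [abs_sq, sq_lt_one_iff_abs_lt_one]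
  have hlog : log (1 - s ^ 2) = log (1 + s) + log (1 - s) := by
    rw [← log_mul (by linarith) (by linarith)]
    ring_nf
  have h := ((hasSum_log_sub_log_of_abs_lt_one hs).mul_left s).sub
    (hasSum_pow_div_log_of_abs_lt_one hs2)
  have hval : s * (log (1 + s) - log (1 - s)) - -log (1 - s ^ 2) = biasInfo s := by
    rw [hlog, biasInfo]
    ring
  rw [hval] at h
  refine h.congr_fun fun k => ?_
  field_simp
  ring

lemma sq_le_biasInfo {s : ℝ} (hs : |s| < 1) : s ^ 2 ≤ biasInfo s := by
  simpa using le_hasSum (hasSum_biasInfo hs) 0 fun k _ => by positivity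

lemma biasInfo_le {s : ℝ} (hs : |s| < 1) :
    biasInfo s ≤ s ^ 2 + s ^ 4 / (6 * (1 - s ^ 2)) := by
  have hs2 : s ^ 2 < 1 := (sq_lt_one_iff_abs_lt_one s).2 hs
  have htail := (hasSum_nat_add_iff' 1).2 (hasSum_biasInfo hs)
  have hgeom := (hasSum_geometric_of_lt_one (sq_nonneg s) hs2).mul_left (s ^ 4 / 6)
  have hle := hasSum_le (fun k : ℕ => ?_) htail hgeom
  · simp only [Finset.sum_range_one, Nat.cast_zero, zero_add, mul_zero, mul_one, pow_one,
      div_one] at hle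
    rw [← div_div, div_eq_mul_inv (s ^ 4 / 6)]
    linarith
  · calc (s ^ 2) ^ (k + 1 + 1) / ((2 * (k + 1 : ℕ) + 1) * ((k + 1 : ℕ) + 1))
        ≤ (s ^ 2) ^ (k + 1 + 1) / 6 := by
          gcongr
          push_cast
          nlinarith [k.cast_nonneg (α := ℝ)]
      _ = s ^ 4 / 6 * (s ^ 2) ^ k := by ring

lemma biasInfo_div_two_log_two_le {s : ℝ} (hs : s ^ 2 ≤ 2 / 11) :
    biasInfo s / (2 * log 2) ≤ 3 / 4 * s ^ 2 := by
  have hlog2 := log_two_gt_d9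
  have hs1 : |s| < 1 := (sq_lt_one_iff_abs_lt_one s).1 (by linarith)
  have htail : s ^ 4 / (6 * (1 - s ^ 2)) ≤ s ^ 2 / 27 := by
    rw [div_le_div_iff₀ (by linarith) (by norm_num)]
    nlinarith [sq_nonneg s]
  rw [div_le_iff₀ (by linarith)]
  nlinarith [biasInfo_le hs1, sq_nonneg s]

lemma symbolInfo_half (w s : ℝ) :
    symbolInfo (fun _ => 1 / 2) ![w * (1 + s) / 2, w * (1 - s) / 2] =
      w * (biasInfo s / (2 * log 2)) := by
  rcases eq_or_ne w 0 with rfl | hw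
  · simp [symbolInfo]
  have htotal : w * (1 + s) / 2 + w * (1 - s) / 2 = w := by ring
  have hdiv : ∀ c, w * c / 2 / (1 / 2 * w) = c := fun c => by field_simp
  simp only [symbolInfo, Fin.sum_univ_two, Matrix.cons_val_zero, Matrix.cons_val_one, htotal, hdiv,
    logb, biasInfo]
  ring

variable {ι : Type*} {w s : ι → ℝ}

/-- The joint pmf of a uniform bit `X` and an observation `Y` of law `w` that makes the posterior
of `X` equal to `(1 ± s) / 2`. -/
noncomputable def biasedJoint (w s : ι → ℝ) : Fin 2 → ι → ℝ :=
  ![fun y => w y * (1 + s y) / 2, fun y => w y * (1 - s y) / 2]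

lemma hasSum_biasedJoint {W D : ℝ} (hw : HasSum w W) (hd : HasSum (fun y => w y * s y) D) :
    HasSum (biasedJoint w s 0) ((W + D) / 2) ∧ HasSum (biasedJoint w s 1) ((W - D) / 2) := by
  constructor
  · simpa [biasedJoint, mul_add] using (hw.add hd).div_const 2
  · simpa [biasedJoint, mul_sub] using (hw.sub hd).div_const 2

lemma marginal_biasedJoint (hw : HasSum w 1) (hd : HasSum (fun y => w y * s y) 0) :
    marginal (biasedJoint w s) = fun _ => 1 / 2 := by
  funext x
  obtain ⟨h0, h1⟩ := hasSum_biasedJoint hw hd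
  fin_cases x
  · exact h0.tsum_eq.trans (by norm_num)
  · exact h1.tsum_eq.trans (by norm_num)

lemma isJointPMF_biasedJoint (hw0 : ∀ y, 0 ≤ w y) (hs : ∀ y, |s y| ≤ 1) (hw : HasSum w 1)
    (hd : HasSum (fun y => w y * s y) 0) : IsJointPMF (biasedJoint w s) := by
  have h0 : ∀ x y, 0 ≤ biasedJoint w s x y := by
    refine Fin.forall_fin_two.2 ⟨fun y => ?_, fun y => ?_⟩ <;>
      refine div_nonneg (mul_nonneg (hw0 y) ?_) zero_le_two <;> linarith [abs_le.1 (hs y)]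
  have hsum : ∀ x, Summable (biasedJoint w s x) :=
    Fin.forall_fin_two.2 ((hasSum_biasedJoint hw hd).imp HasSum.summable HasSum.summable)
  refine ⟨h0, (summable_prod_of_nonneg fun z => h0 z.1 z.2).2 ⟨hsum, .of_finite⟩, ?_⟩
  change ∑' x, marginal (biasedJoint w s) x = 1
  rw [marginal_biasedJoint hw hd, tsum_fintype]
  norm_num

lemma miBits_biasedJoint (hw0 : ∀ y, 0 ≤ w y) (hs : ∀ y, |s y| ≤ 1) (hw : HasSum w 1)
    (hd : HasSum (fun y => w y * s y) 0) :
    miBits (biasedJoint w s) = ∑' y, w y * (biasInfo (s y) / (2 * log 2)) := by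
  rw [(isJointPMF_biasedJoint hw0 hs hw hd).miBits_eq_tsum_symbolInfo, marginal_biasedJoint hw hd]
  refine tsum_congr fun y => ?_
  rw [← symbolInfo_half]
  congr 1
  funext x
  fin_cases x <;> rfl

section Cells

variable {γ : Type*} [DecidableEq γ] {S : Finset ι}

lemma cellInfo_biasedJoint (hw0 : ∀ y, 0 ≤ w y) (hw : HasSum w 1)
    (hd : HasSum (fun y => w y * s y) 0) (hwS : ∀ y ∉ S, w y = 0) (F : ι → γ) (i : γ) {W D : ℝ}
    (hW : ∑ y ∈ S with F y = i, w y = W) (hD : ∑ y ∈ S with F y = i, w y * s y = D) :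
    cellInfo (biasedJoint w s) F i = W * (biasInfo (D / W) / (2 * log 2)) := by
  have hWsum : HasSum (fun y => if F y = i then w y else 0) W := by
    rw [← hW, Finset.sum_filter]
    exact hasSum_sum_of_ne_finset_zero fun y hy => by rw [hwS y hy, ite_self]
  have hDsum : HasSum (fun y => (if F y = i then w y else 0) * s y) D := by
    rw [← hD, Finset.sum_filter]
    simp only [ite_mul, zero_mul]
    exact hasSum_sum_of_ne_finset_zero fun y hy => by rw [hwS y hy, zero_mul, ite_self]
  have hDW : W * (D / W) = D := by
    refine mul_div_cancel_of_imp' fun hW0 => ?_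
    have hw_cell := (Finset.sum_eq_zero_iff_of_nonneg fun y _ => hw0 y).1 (hW.trans hW0)
    rw [← hD]
    exact Finset.sum_eq_zero fun y hy => by rw [hw_cell y hy, zero_mul]
  rw [cellInfo, marginal_biasedJoint hw hd, ← symbolInfo_half]
  congr 1
  funext x
  obtain ⟨h0, h1⟩ := hasSum_biasedJoint hWsum hDsum
  fin_cases x
  · refine Eq.trans (tsum_congr fun y => ?_) (h0.tsum_eq.trans ?_)
    · simp [biasedJoint, ite_mul, ite_div]
    · simp [mul_add, hDW]
  · refine Eq.trans (tsum_congr fun y => ?_) (h1.tsum_eq.trans ?_)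
    · simp [biasedJoint, ite_mul, ite_div]
    · simp [mul_sub, hDW]

lemma cellInfo_biasedJoint_le {c : ℝ} (hc : 0 ≤ c)
    (hw0 : ∀ y, 0 ≤ w y) (hs : ∀ y, s y ^ 2 ≤ 2 / 11) (hw : HasSum w 1)
    (hd : HasSum (fun y => w y * s y) 0) (hwS : ∀ y ∉ S, w y = 0)
    (hB : ∀ B ⊆ S, (∑ y ∈ B, w y * s y) ^ 2 ≤ c * ((∑ y ∈ B, w y) * (1 - ∑ y ∈ B, w y)))
    (F : ι → γ) (i : γ) : cellInfo (biasedJoint w s) F i ≤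
      3 / 4 * c * (1 - ∑ y ∈ S with F y = i, w y) := by
  obtain ⟨W, hW⟩ : ∃ W, ∑ y ∈ S with F y = i, w y = W := ⟨_, rfl⟩
  obtain ⟨D, hD⟩ : ∃ D, ∑ y ∈ S with F y = i, w y * s y = D := ⟨_, rfl⟩
  have hBcell : D ^ 2 ≤ c * (W * (1 - W)) := hW ▸ hD ▸ hB _ (Finset.filter_subset _ _)
  rw [cellInfo_biasedJoint hw0 hw hd hwS F i hW hD, hW]
  obtain hW0 | hW0 := (hW ▸ Finset.sum_nonneg fun y _ => hw0 y : 0 ≤ W).eq_or_lt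
  · rw [← hW0]
    simpa using hc
  have hsecond : ∑ y ∈ S with F y = i, w y * s y ^ 2 ≤ W * (2 / 11) := by
    rw [← hW, Finset.sum_mul]
    exact Finset.sum_le_sum fun y _ => mul_le_mul_of_nonneg_left (hs y) (hw0 y)
  have hCauchy : D ^ 2 ≤ W * ∑ y ∈ S with F y = i, w y * s y ^ 2 := by
    rw [← hD, ← hW]
    exact Finset.sum_sq_le_sum_mul_sum_of_sq_le_mul _ (fun y _ => hw0 y)
      (fun y _ => mul_nonneg (hw0 y) (sq_nonneg (s y))) fun y _ => le_of_eq (by ring)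
  have hDW : (D / W) ^ 2 ≤ 2 / 11 := by
    rw [div_pow, div_le_iff₀ (by positivity)]
    linarith [mul_le_mul_of_nonneg_left hsecond hW0.le]
  calc W * (biasInfo (D / W) / (2 * log 2))
      ≤ W * (3 / 4 * (D / W) ^ 2) := by
        gcongr
        exact biasInfo_div_two_log_two_le hDW
    _ = 3 / 4 * (D ^ 2 / W) := by field_simp
    _ ≤ 3 / 4 * (c * (1 - W)) := by
        gcongr
        rw [div_le_iff₀ hW0]
        linarith
    _ = 3 / 4 * c * (1 - W) := by ring

end Cells

theorem quantMI_biasedJoint_le {S : Finset ι} {c : ℝ} (hc : 0 ≤ c)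
    (hw0 : ∀ y, 0 ≤ w y) (hs : ∀ y, s y ^ 2 ≤ 2 / 11) (hw : HasSum w 1)
    (hd : HasSum (fun y => w y * s y) 0) (hwS : ∀ y ∉ S, w y = 0)
    (hB : ∀ B ⊆ S, (∑ y ∈ B, w y * s y) ^ 2 ≤ c * ((∑ y ∈ B, w y) * (1 - ∑ y ∈ B, w y)))
    (k : ℕ) : quantMI (biasedJoint w s) (k + 1) ≤ 3 / 4 * c * k := by
  have hp : IsJointPMF (biasedJoint w s) :=
    isJointPMF_biasedJoint hw0 (fun y => (sq_le_one_iff_abs_le_one _).1 (by linarith [hs y])) hw hd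
  refine Real.iSup_le (fun f => ?_) (by positivity)
  calc miBits (quantJoint (biasedJoint w s) f)
      ≤ ∑ m, 3 / 4 * c * (1 - ∑ y ∈ S with f y = m, w y) :=
        (hp.miBits_quantJoint f).trans_le (Finset.sum_le_sum fun m _ =>
          cellInfo_biasedJoint_le hc hw0 hs hw hd hwS hB f m)
    _ = 3 / 4 * c * k := by
        rw [← Finset.mul_sum, Finset.sum_sub_distrib, Finset.sum_fiberwise,
          (hasSum_sum_of_ne_finset_zero hwS).unique hw]
        simp

lemma exists_isJointPMF_miBits_eq {β : ℝ} (hβ : 0 ≤ β) (hβ1 : β ≤ 1) :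
    ∃ p : Fin 2 → ℕ → ℝ, IsJointPMF p ∧ miBits p = β := by
  let w : ℕ → ℝ := fun y => if y < 2 then β / 2 else if y = 2 then 1 - β else 0
  let s : ℕ → ℝ := fun y => if y = 0 then 1 else if y = 1 then -1 else 0
  have hwS : ∀ y ∉ Finset.range 3, w y = 0 := fun y hy => by
    rw [Finset.mem_range] at hy
    simp only [w, if_neg (show ¬ y < 2 by lia), if_neg (show y ≠ 2 by lia)]
  have hw0 : ∀ y, 0 ≤ w y := fun y =>
    ite_nonneg (by positivity) (ite_nonneg (by linarith) le_rfl)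
  have hs : ∀ y, |s y| ≤ 1 := fun y => by
    simp only [s]
    split_ifs <;> simp
  have hsum : ∀ g : ℝ → ℝ,
      HasSum (fun y => w y * g (s y)) (β / 2 * g 1 + β / 2 * g (-1) + (1 - β) * g 0) := fun g => by
    have heq : β / 2 * g 1 + β / 2 * g (-1) + (1 - β) * g 0 =
        ∑ y ∈ Finset.range 3, w y * g (s y) := by
      simp [Finset.sum_range_succ, w, s]
    rw [heq]
    exact hasSum_sum_of_ne_finset_zero fun y hy => by rw [hwS y hy, zero_mul]
  have hw : HasSum w 1 := by simpa using hsum fun _ => 1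
  have hd : HasSum (fun y => w y * s y) 0 := by simpa using hsum id
  have hlog2 : (2 : ℝ) * log 2 ≠ 0 := by positivity
  refine ⟨biasedJoint w s, isJointPMF_biasedJoint hw0 hs hw hd, ?_⟩
  rw [miBits_biasedJoint hw0 hs hw hd, (hsum fun t => biasInfo t / (2 * log 2)).tsum_eq]
  norm_num [biasInfo, hlog2]
end BiasedBit

section Semicircle

lemma sin_sub_mul_sin_add (a b : ℝ) : sin (b - a) * sin (b + a) = sin b ^ 2 - sin a ^ 2 := by
  rw [sin_sub, sin_add]
  linear_combination sin b ^ 2 * sin_sq_add_cos_sq a - sin a ^ 2 * sin_sq_add_cos_sq b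

lemma sin_sub_mul_cos_add (a b : ℝ) :
    sin (b - a) * cos (b + a) = sin b * cos b - sin a * cos a := by
  rw [sin_sub, cos_add]
  linear_combination sin b * cos b * sin_sq_add_cos_sq a - sin a * cos a * sin_sq_add_cos_sq b

lemma sin_sub_div_sin_add {a b : ℝ} (ha : cos a ≠ 0) (hb : cos b ≠ 0) :
    sin (b - a) / sin (b + a) = (tan b - tan a) / (tan b + tan a) := by
  have hcos : cos b * cos a ≠ 0 := mul_ne_zero hb ha
  rw [sin_sub, sin_add, tan_eq_sin_div_cos, tan_eq_sin_div_cos, div_sub_div _ _ hb ha,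
    div_add_div _ _ hb ha, div_div_div_cancel_right₀ hcos]

lemma sin_max_sq_le_sin_max_sq {x y : ℝ} (hxy : x ≤ y) (hy : y ≤ π / 2) :
    sin (max x 0) ^ 2 ≤ sin (max y 0) ^ 2 := by
  have hpi := pi_pos
  have hx0 : 0 ≤ sin (max x 0) :=
    sin_nonneg_of_nonneg_of_le_pi (le_max_right x 0) (max_le (by linarith) hpi.le)
  gcongr
  exact sin_le_sin_of_le_of_le_pi_div_two (by linarith [le_max_right x 0])
    (max_le hy (by linarith)) (max_le_max_right 0 hxy)

lemma sin_sq_sub_sin_sq_le {x y : ℝ} (hxy : x ≤ y) (hx : -(π / 2) ≤ x) :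
    sin y ^ 2 - sin x ^ 2 ≤ sin (max y 0) ^ 2 - sin (max x 0) ^ 2 := by
  rcases le_total x 0 with hx0 | hx0
  · rcases le_total y 0 with hy0 | hy0
    · have hneg := sin_max_sq_le_sin_max_sq (neg_le_neg hxy) (by linarith)
      rw [max_eq_left (by linarith), max_eq_left (by linarith), sin_neg, sin_neg, neg_sq,
        neg_sq] at hneg
      rw [max_eq_right hx0, max_eq_right hy0]
      linarith
    · rw [max_eq_right hx0, max_eq_left hy0, sin_zero]
      linarith [sq_nonneg (sin x)]
  · rw [max_eq_left hx0, max_eq_left (hx0.trans hxy)]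

lemma cot_sq_le_cot_sq {α σ : ℝ} (hα : 0 < α) (hασ : α ≤ σ) (hσ : σ ≤ π - α) :
    cot σ ^ 2 ≤ cot α ^ 2 := by
  have hsinα : 0 < sin α := sin_pos_of_pos_of_lt_pi hα (by linarith)
  have hsin : sin α ≤ sin σ := by
    rcases le_total σ (π / 2) with h | h
    · exact sin_le_sin_of_le_of_le_pi_div_two (by linarith) h hασ
    · rw [← sin_pi_sub σ]
      exact sin_le_sin_of_le_of_le_pi_div_two (by linarith) (by linarith) (by linarith)
  have hsq : sin α ^ 2 ≤ sin σ ^ 2 := by gcongr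
  rw [cot_eq_cos_div_sin, cot_eq_cos_div_sin, div_pow, div_pow,
    div_le_div_iff₀ (pow_pos (hsinα.trans_le hsin) 2) (pow_pos hsinα 2), cos_sq', cos_sq']
  linarith

/-- The probability that the `k`-th atom of `Y` receives from the partition `θ` of `[0, π / 2]`,
namely the increment of `sin² θ`. -/
noncomputable def arcWeight (θ : ℕ → ℝ) (k : ℕ) : ℝ :=
  sin (θ (k + 1) - θ k) * sin (θ (k + 1) + θ k)

/-- The posterior bias of the `k`-th atom, up to a constant factor: the slope of the chord between
the points of parameters `θ k` and `θ (k + 1)` of the semicircle `θ ↦ (sin² θ, sin θ cos θ)`. -/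
noncomputable def arcSlope (θ : ℕ → ℝ) (k : ℕ) : ℝ := cot (θ (k + 1) + θ k)

lemma arcWeight_mul_arcSlope_sq (θ : ℕ → ℝ) (k : ℕ) :
    arcWeight θ k * arcSlope θ k ^ 2 =
      sin (θ (k + 1) - θ k) / sin (θ (k + 1) + θ k) - arcWeight θ k := by
  rw [arcWeight, arcSlope, cot_eq_cos_div_sin]
  rcases eq_or_ne (sin (θ (k + 1) + θ k)) 0 with h | h
  · simp [h]
  · rw [div_pow, cos_sq']
    field_simp

/-- `θ` lists in increasing order the points of a partition of `[0, π / 2]` into at most `K` arcs,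
and is constant from the index `K` on. -/
structure IsQuarterPartition (θ : ℕ → ℝ) (K : ℕ) : Prop where
  mono : Monotone θ
  zero : θ 0 = 0
  eq_pi_div_two : ∀ k, K ≤ k → θ k = π / 2

namespace IsQuarterPartition

variable {θ : ℕ → ℝ} {K : ℕ}

lemma nonneg (h : IsQuarterPartition θ K) (k : ℕ) : 0 ≤ θ k := h.zero ▸ h.mono k.zero_le

lemma le_pi_div_two (h : IsQuarterPartition θ K) (k : ℕ) : θ k ≤ π / 2 :=
  (h.mono (le_max_left k K)).trans_eq (h.eq_pi_div_two _ (le_max_right k K))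

lemma arcWeight_nonneg (h : IsQuarterPartition θ K) (k : ℕ) : 0 ≤ arcWeight θ k := by
  have hk := h.mono k.le_succ
  apply mul_nonneg <;> apply sin_nonneg_of_nonneg_of_le_pi <;>
    linarith [h.nonneg k, h.nonneg (k + 1), h.le_pi_div_two k, h.le_pi_div_two (k + 1)]

lemma arcWeight_eq_zero (h : IsQuarterPartition θ K) (k : ℕ) (hk : k ∉ Finset.range K) :
    arcWeight θ k = 0 := by
  rw [Finset.mem_range, not_lt] at hk
  simp [arcWeight, h.eq_pi_div_two k hk, h.eq_pi_div_two (k + 1) (by lia)]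

lemma arcWeight_mul_arcSlope (h : IsQuarterPartition θ K) (k : ℕ) :
    arcWeight θ k * arcSlope θ k = sin (θ (k + 1) - θ k) * cos (θ (k + 1) + θ k) := by
  have hk := h.mono k.le_succ
  rw [arcWeight, arcSlope, cot_eq_cos_div_sin]
  rcases eq_or_ne (sin (θ (k + 1) + θ k)) 0 with hsin | hsin
  · suffices θ (k + 1) = θ k by simp [this]
    rcases (add_nonneg (h.nonneg (k + 1)) (h.nonneg k)).eq_or_lt with h0 | h0
    · linarith [h.nonneg k]
    · by_contra hne
      have hlt : θ k < θ (k + 1) := hk.lt_of_ne' hne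
      exact (sin_pos_of_pos_of_lt_pi h0 (by linarith [h.le_pi_div_two (k + 1)])).ne' hsin
  · field_simp

lemma sum_arcWeight (h : IsQuarterPartition θ K) :
    ∑ k ∈ Finset.range K, arcWeight θ k = 1 := by
  simp only [arcWeight, sin_sub_mul_sin_add]
  rw [Finset.sum_range_sub fun k => sin (θ k) ^ 2, h.zero, h.eq_pi_div_two K le_rfl]
  simp

lemma sum_arcWeight_mul_arcSlope (h : IsQuarterPartition θ K) :
    ∑ k ∈ Finset.range K, arcWeight θ k * arcSlope θ k = 0 := by
  simp only [h.arcWeight_mul_arcSlope, sin_sub_mul_cos_add]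
  rw [Finset.sum_range_sub fun k => sin (θ k) * cos (θ k), h.zero, h.eq_pi_div_two K le_rfl]
  simp

lemma hasSum_arcWeight (h : IsQuarterPartition θ K) : HasSum (arcWeight θ) 1 :=
  h.sum_arcWeight ▸ hasSum_sum_of_ne_finset_zero h.arcWeight_eq_zero

lemma hasSum_arcWeight_mul_arcSlope (h : IsQuarterPartition θ K) :
    HasSum (fun k => arcWeight θ k * arcSlope θ k) 0 :=
  h.sum_arcWeight_mul_arcSlope ▸ hasSum_sum_of_ne_finset_zero fun k hk => by
    rw [h.arcWeight_eq_zero k hk, zero_mul]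

/-- The left-hand side is the component of a sum of chords of the semicircle in the direction of
its point of parameter `φ`. Only chords before that point contribute positively, and they add up
to at most the chord from the origin to it. -/
lemma sum_arc_le_sin_sq (h : IsQuarterPartition θ K) {φ : ℝ} (hφ0 : 0 ≤ φ) (hφ1 : φ ≤ π / 2)
    {B : Finset ℕ} (hB : B ⊆ Finset.range K) :
    sin (2 * φ) * ∑ k ∈ B, arcWeight θ k * arcSlope θ k - cos (2 * φ) * ∑ k ∈ B, arcWeight θ k ≤
      sin φ ^ 2 := by
  let v : ℝ → ℝ := fun t => sin (max (φ - t) 0) ^ 2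
  have hchord : ∀ k, sin (2 * φ) * (arcWeight θ k * arcSlope θ k) - cos (2 * φ) * arcWeight θ k =
      sin (φ - θ k) ^ 2 - sin (φ - θ (k + 1)) ^ 2 := fun k => by
    rw [h.arcWeight_mul_arcSlope, arcWeight, ← sin_sub_mul_sin_add,
      show φ - θ k - (φ - θ (k + 1)) = θ (k + 1) - θ k by ring,
      show φ - θ k + (φ - θ (k + 1)) = 2 * φ - (θ (k + 1) + θ k) by ring, sin_sub (2 * φ)]
    ring
  have hmono : ∀ k, v (θ (k + 1)) ≤ v (θ k) := fun k =>
    sin_max_sq_le_sin_max_sq (by linarith [h.mono k.le_succ]) (by linarith [h.nonneg k])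
  have hincr : ∀ k, sin (φ - θ k) ^ 2 - sin (φ - θ (k + 1)) ^ 2 ≤ v (θ k) - v (θ (k + 1)) :=
    fun k => sin_sq_sub_sin_sq_le (by linarith [h.mono k.le_succ])
      (by linarith [h.le_pi_div_two (k + 1)])
  calc sin (2 * φ) * ∑ k ∈ B, arcWeight θ k * arcSlope θ k - cos (2 * φ) * ∑ k ∈ B, arcWeight θ k
      = ∑ k ∈ B, (sin (φ - θ k) ^ 2 - sin (φ - θ (k + 1)) ^ 2) := by
        rw [Finset.mul_sum, Finset.mul_sum, ← Finset.sum_sub_distrib]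
        exact Finset.sum_congr rfl fun k _ => hchord k
    _ ≤ ∑ k ∈ B, (v (θ k) - v (θ (k + 1))) := Finset.sum_le_sum fun k _ => hincr k
    _ ≤ ∑ k ∈ Finset.range K, (v (θ k) - v (θ (k + 1))) :=
        Finset.sum_le_sum_of_subset_of_nonneg hB fun k _ _ => sub_nonneg.2 (hmono k)
    _ = sin φ ^ 2 := by
        rw [Finset.sum_range_sub' fun k => v (θ k), h.zero, h.eq_pi_div_two K le_rfl]
        simp [v, hφ0, hφ1]

lemma sum_arc_sq_le_of_pos (h : IsQuarterPartition θ K) {B : Finset ℕ} (hB : B ⊆ Finset.range K)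
    (hE : 0 < ∑ k ∈ B, arcWeight θ k * arcSlope θ k) :
    (∑ k ∈ B, arcWeight θ k * arcSlope θ k) ^ 2 ≤
      (∑ k ∈ B, arcWeight θ k) * (1 - ∑ k ∈ B, arcWeight θ k) := by
  have hdir := fun φ h0 h1 => h.sum_arc_le_sin_sq (φ := φ) h0 h1 hB
  have hW0 : 0 ≤ ∑ k ∈ B, arcWeight θ k := Finset.sum_nonneg fun k _ => h.arcWeight_nonneg k
  have hWE : ∑ k ∈ B, arcWeight θ k = 0 → ∑ k ∈ B, arcWeight θ k * arcSlope θ k = 0 := fun hW =>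
    Finset.sum_eq_zero fun k hk => by
      rw [(Finset.sum_eq_zero_iff_of_nonneg fun k _ => h.arcWeight_nonneg k).1 hW k hk, zero_mul]
  generalize ∑ k ∈ B, arcWeight θ k = W at hdir hW0 hWE ⊢
  generalize ∑ k ∈ B, arcWeight θ k * arcSlope θ k = E at hdir hE hWE ⊢
  have hW : 0 < W := hW0.lt_of_ne' fun hW => hE.ne' (hWE hW)
  obtain ⟨φ, hφ0, hφ1, hopt⟩ : ∃ φ, 0 ≤ φ ∧ φ ≤ π / 2 ∧ E * sin φ = W * cos φ := by
    refine ⟨arctan (W / E), arctan_nonneg.2 (by positivity), (arctan_lt_pi_div_two _).le, ?_⟩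
    have htan := tan_arctan (W / E)
    rw [tan_eq_sin_div_cos, div_eq_div_iff (cos_arctan_pos _).ne' hE.ne'] at htan
    linarith
  have hφ := hdir φ hφ0 hφ1
  rw [sin_two_mul, cos_two_mul] at hφ
  have hWsin : W ≤ sin φ ^ 2 := by
    linear_combination hφ - 2 * cos φ * hopt
  have hnorm : sin φ ^ 2 * (E ^ 2 + W ^ 2) = W ^ 2 := by
    linear_combination (E * sin φ + W * cos φ) * hopt + W ^ 2 * sin_sq_add_cos_sq φ
  have hmul := mul_le_mul_of_nonneg_right hWsin (add_nonneg (sq_nonneg E) (sq_nonneg W))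
  rw [hnorm, sq W, mul_le_mul_iff_right₀ hW] at hmul
  linarith

lemma sum_arc_sq_le (h : IsQuarterPartition θ K) {B : Finset ℕ} (hB : B ⊆ Finset.range K) :
    (∑ k ∈ B, arcWeight θ k * arcSlope θ k) ^ 2 ≤
      (∑ k ∈ B, arcWeight θ k) * (1 - ∑ k ∈ B, arcWeight θ k) := by
  have hW := (Finset.sum_sdiff hB (f := arcWeight θ)).trans h.sum_arcWeight
  have hE := (Finset.sum_sdiff hB (f := fun k => arcWeight θ k * arcSlope θ k)).trans
    h.sum_arcWeight_mul_arcSlope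
  rcases lt_trichotomy (∑ k ∈ B, arcWeight θ k * arcSlope θ k) 0 with hneg | hzero | hpos
  · have hcompl := h.sum_arc_sq_le_of_pos (Finset.sdiff_subset (t := B)) (by linarith)
    rw [eq_sub_of_add_eq hW, eq_sub_of_add_eq hE] at hcompl
    linarith
  · have hB0 : 0 ≤ ∑ k ∈ B, arcWeight θ k := Finset.sum_nonneg fun k _ => h.arcWeight_nonneg k
    have hBc0 : 0 ≤ ∑ k ∈ Finset.range K \ B, arcWeight θ k :=
      Finset.sum_nonneg fun k _ => h.arcWeight_nonneg k
    rw [hzero]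
    nlinarith
  · exact h.sum_arc_sq_le_of_pos hB hpos

end IsQuarterPartition

end Semicircle

section ExtremalFamily

/-- Partition of `[0, π / 2]` whose interior points have tangents in geometric progression from
`exp (-Z / 2)` to `exp (Z / 2)`. -/
noncomputable def tangentPartition (N : ℕ) (Z : ℝ) : ℕ → ℝ
  | 0 => 0
  | k + 1 => if k ≤ N then arctan (exp ((2 * k / N - 1) * Z / 2)) else π / 2

variable {N : ℕ} {Z : ℝ}

lemma isQuarterPartition_tangentPartition (N : ℕ) (hZ : 0 ≤ Z) :
    IsQuarterPartition (tangentPartition N Z) (N + 2) where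
  mono := by
    refine monotone_nat_of_le_succ fun k => ?_
    rcases k with _ | k
    · rw [tangentPartition, tangentPartition, if_pos N.zero_le]
      exact arctan_nonneg.2 (exp_pos _).le
    · rw [tangentPartition, tangentPartition]
      split_ifs with hk hk'
      · refine arctan_mono (exp_le_exp.2 ?_)
        push_cast
        gcongr
        linarith
      · exact (arctan_lt_pi_div_two _).le
      · lia
      · exact le_rfl
  zero := rfl
  eq_pi_div_two k hk := by
    obtain ⟨k, rfl⟩ := Nat.exists_eq_add_of_le' (show 1 ≤ k by lia)
    exact if_neg (by lia)

lemma sin_sub_div_sin_add_tangentPartition (hN : 0 < N) {k : ℕ} (hk : k < N) :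
    sin (tangentPartition N Z (k + 2) - tangentPartition N Z (k + 1)) /
      sin (tangentPartition N Z (k + 2) + tangentPartition N Z (k + 1)) = tanh (Z / (2 * N)) := by
  rw [tangentPartition, tangentPartition, if_pos (by lia), if_pos hk.le,
    sin_sub_div_sin_add (cos_arctan_pos _).ne' (cos_arctan_pos _).ne', tan_arctan, tan_arctan,
    tanh_eq]
  obtain ⟨m, hm⟩ : ∃ m, m = ((2 * k + 1 : ℝ) / N - 1) * Z / 2 := ⟨_, rfl⟩
  have hlo : (2 * (k : ℝ) / N - 1) * Z / 2 = m + -(Z / (2 * N)) := by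
    rw [hm]
    field_simp
    ring
  have hhi : (2 * ((k + 1 : ℕ) : ℝ) / N - 1) * Z / 2 = m + Z / (2 * N) := by
    rw [hm]
    push_cast
    field_simp
    ring
  rw [hlo, hhi, exp_add, exp_add, ← mul_sub, ← mul_add, mul_div_mul_left _ _ (exp_pos m).ne']

lemma tangentPartition_one (N : ℕ) (Z : ℝ) :
    tangentPartition N Z 1 = arctan (exp (-(Z / 2))) := by
  simp [tangentPartition, neg_div]

lemma tangentPartition_add_one (hN : 0 < N) (Z : ℝ) :
    tangentPartition N Z (N + 1) = π / 2 - tangentPartition N Z 1 := by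
  have hN0 : (N : ℝ) ≠ 0 := Nat.cast_ne_zero.2 hN.ne'
  rw [tangentPartition_one, ← arctan_inv_of_pos (exp_pos _), ← exp_neg, neg_neg, tangentPartition,
    if_pos le_rfl, mul_div_cancel_right₀ _ hN0]
  ring_nf

lemma sum_arcWeight_mul_arcSlope_sq_tangentPartition (hN : 0 < N) (hZ : 0 ≤ Z) :
    ∑ k ∈ Finset.range (N + 2),
      arcWeight (tangentPartition N Z) k * arcSlope (tangentPartition N Z) k ^ 2 =
        N * tanh (Z / (2 * N)) + 1 := by
  have h := isQuarterPartition_tangentPartition N hZ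
  have hmid : ∀ k ∈ Finset.range N, _ = tanh (Z / (2 * N)) := fun k hk =>
    sin_sub_div_sin_add_tangentPartition (Z := Z) hN (Finset.mem_range.1 hk)
  have hfirst : sin (tangentPartition N Z 1) ≠ 0 := by
    rw [tangentPartition_one, sin_arctan]
    positivity
  have hlast : cos (tangentPartition N Z (N + 1)) ≠ 0 := by
    rwa [tangentPartition_add_one hN, cos_pi_div_two_sub]
  simp only [arcWeight_mul_arcSlope_sq]
  rw [Finset.sum_sub_distrib, h.sum_arcWeight, Finset.sum_range_succ, Finset.sum_range_succ',
    Finset.sum_congr rfl hmid, h.zero, h.eq_pi_div_two (N + 1 + 1) le_rfl, sin_pi_div_two_sub,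
    add_comm (π / 2), sin_add_pi_div_two, div_self hlast]
  simp [div_self hfirst]

lemma arcSlope_tangentPartition_sq_le (hN : 0 < N) (hZ : 0 ≤ Z) (k : ℕ) :
    arcSlope (tangentPartition N Z) k ^ 2 ≤ exp Z := by
  have h := isQuarterPartition_tangentPartition N hZ
  have hpos : 0 < tangentPartition N Z 1 := by
    rw [tangentPartition_one]
    exact arctan_pos.2 (exp_pos _)
  rw [arcSlope]
  rcases le_or_gt k (N + 1) with hk | hk
  · have hlo : tangentPartition N Z 1 ≤ tangentPartition N Z (k + 1) := h.mono (by lia)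
    have hhi : tangentPartition N Z k ≤ π / 2 - tangentPartition N Z 1 :=
      (h.mono hk).trans_eq (tangentPartition_add_one hN Z)
    refine (cot_sq_le_cot_sq hpos (by linarith [h.nonneg k])
      (by linarith [h.le_pi_div_two (k + 1)])).trans_eq ?_
    rw [← tan_inv_eq_cot, tangentPartition_one, tan_arctan, ← exp_neg, neg_neg, ← exp_nat_mul]
    ring_nf
  · rw [h.eq_pi_div_two (k + 1) (by lia), h.eq_pi_div_two k hk, add_halves, cot_eq_cos_div_sin,
      sin_pi, div_zero, sq, zero_mul]
    exact (exp_pos Z).le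

theorem exists_isJointPMF_tangentPartition (hN : 0 < N) (hZ : 0 ≤ Z) {κ : ℝ}
    (hκ : κ ^ 2 * exp Z ≤ 2 / 11) :
    ∃ p : Fin 2 → ℕ → ℝ, IsJointPMF p ∧
      κ ^ 2 * ((N * tanh (Z / (2 * N)) + 1) / (2 * log 2)) ≤ miBits p ∧
        ∀ k : ℕ, quantMI p (k + 1) ≤ 3 / 4 * κ ^ 2 * k := by
  have h := isQuarterPartition_tangentPartition N hZ
  have hsum := sum_arcWeight_mul_arcSlope_sq_tangentPartition hN hZ
  have hslope := arcSlope_tangentPartition_sq_le hN hZ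
  generalize tangentPartition N Z = θ at h hsum hslope
  have hs : ∀ k, (κ * arcSlope θ k) ^ 2 ≤ 2 / 11 := fun k => by
    rw [mul_pow]
    exact (mul_le_mul_of_nonneg_left (hslope k) (sq_nonneg κ)).trans hκ
  have hs1 : ∀ k, |κ * arcSlope θ k| < 1 := fun k =>
    (sq_lt_one_iff_abs_lt_one _).1 ((hs k).trans_lt (by norm_num))
  have hw := h.hasSum_arcWeight
  have hd : HasSum (fun k => arcWeight θ k * (κ * arcSlope θ k)) 0 := by
    simpa only [mul_left_comm, mul_zero] using h.hasSum_arcWeight_mul_arcSlope.mul_left κ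
  refine ⟨biasedJoint (arcWeight θ) fun k => κ * arcSlope θ k,
    isJointPMF_biasedJoint h.arcWeight_nonneg (fun k => (hs1 k).le) hw hd, ?_, fun k => ?_⟩
  · rw [miBits_biasedJoint h.arcWeight_nonneg (fun k => (hs1 k).le) hw hd,
      tsum_eq_sum fun k hk => by rw [h.arcWeight_eq_zero k hk, zero_mul], ← hsum,
      Finset.sum_div, Finset.mul_sum]
    refine Finset.sum_le_sum fun k _ => ?_
    calc κ ^ 2 * (arcWeight θ k * arcSlope θ k ^ 2 / (2 * log 2))
        = arcWeight θ k * ((κ * arcSlope θ k) ^ 2 / (2 * log 2)) := by ring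
      _ ≤ arcWeight θ k * (biasInfo (κ * arcSlope θ k) / (2 * log 2)) := by
        gcongr
        · exact h.arcWeight_nonneg k
        · exact sq_le_biasInfo (hs1 k)
  · refine quantMI_biasedJoint_le (sq_nonneg κ) h.arcWeight_nonneg hs hw hd h.arcWeight_eq_zero
      (fun B hB => ?_) k
    simp only [mul_left_comm _ κ]
    rw [← Finset.mul_sum, mul_pow]
    exact mul_le_mul_of_nonneg_left (h.sum_arc_sq_le hB) (sq_nonneg κ)

lemma div_one_add_le_tanh {t : ℝ} (ht : 0 ≤ t) : t / (1 + t) ≤ tanh t := by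
  have hexp : exp (-t) * (1 + 2 * t) ≤ exp t := by
    calc exp (-t) * (1 + 2 * t) ≤ exp (-t) * exp (2 * t) := by
          gcongr
          linarith [add_one_le_exp (2 * t)]
      _ = exp t := by
          rw [← exp_add]
          ring_nf
  rw [tanh_eq, div_le_div_iff₀ (by positivity) (by positivity)]
  linarith

lemma exists_le_mul_tanh {c Z : ℝ} (hZ : 0 ≤ Z) (hc : c < Z / 2) :
    ∃ N : ℕ, 0 < N ∧ c ≤ N * tanh (Z / (2 * N)) := by
  obtain ⟨N, hN⟩ := exists_nat_gt (max (c * Z / (Z - 2 * c)) 0)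
  obtain ⟨hcN, hN0⟩ := max_lt_iff.1 hN
  refine ⟨N, Nat.cast_pos.1 hN0, ?_⟩
  rw [div_lt_iff₀ (by linarith)] at hcN
  calc c ≤ N * (Z / (2 * N) / (1 + Z / (2 * N))) := by
        rw [show N * (Z / (2 * N) / (1 + Z / (2 * N))) = N * Z / (2 * N + Z) by field_simp,
          le_div_iff₀ (by positivity)]
        linarith
    _ ≤ N * tanh (Z / (2 * N)) := by
        gcongr
        exact div_one_add_le_tanh (by positivity)

theorem exists_isJointPMF_quantMI_le {β : ℝ} (hβ : 0 < β) (hℓ : 3 < logb 2 (1 / β)) :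
    ∃ p : Fin 2 → ℕ → ℝ, IsJointPMF p ∧ β ≤ miBits p ∧
      ∀ k : ℕ, quantMI p (k + 1) ≤ β * (3 * (k / logb 2 (1 / β))) := by
  set ℓ := logb 2 (1 / β) with hℓ_def
  have hlog2 := log_two_gt_d9
  have hlogβ : ℓ * log 2 = -log β := by
    rw [hℓ_def, logb, one_div, log_inv, div_mul_cancel₀ _ (by positivity)]
  -- `Z` makes `κ ^ 2 * exp Z = 2 / 11` for `κ ^ 2 = 4 * β / ℓ`.
  obtain ⟨Z, hZ⟩ : ∃ Z, Z = ℓ * log 2 + log (ℓ / 22) := ⟨_, rfl⟩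
  have hexpZ : exp Z = ℓ / (22 * β) := by
    rw [hZ, hlogβ, exp_add, exp_neg, exp_log hβ, exp_log (by positivity)]
    field_simp
  have hlogℓ : -2 < log (ℓ / 22) := by
    have he : 22 / 3 < exp 2 := by
      calc (22 / 3 : ℝ) < exp 1 ^ 2 := by nlinarith [exp_one_gt_d9]
        _ = exp 2 := by rw [exp_one_pow, Nat.cast_ofNat]
    rw [lt_log_iff_exp_lt (by positivity), exp_neg]
    calc (exp 2)⁻¹ < (22 / 3)⁻¹ := by gcongr
      _ = 3 / 22 := inv_div _ _
      _ < ℓ / 22 := by gcongr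
  obtain ⟨N, hN, hle⟩ := exists_le_mul_tanh (c := ℓ * log 2 / 2 - 1) (Z := Z)
    (by nlinarith) (by linarith)
  have hκ : √(4 * β / ℓ) ^ 2 = 4 * β / ℓ := sq_sqrt (by positivity)
  obtain ⟨p, hp, hinfo, hquant⟩ := exists_isJointPMF_tangentPartition (κ := √(4 * β / ℓ))
    (Z := Z) hN (by nlinarith) (by rw [hκ, hexpZ, div_mul_div_comm]; field_simp; norm_num)
  rw [hκ] at hinfo hquant
  refine ⟨p, hp, ?_, fun k => (hquant k).trans_eq (by ring)⟩
  calc β = 4 * β / ℓ * (ℓ * log 2 / 2 / (2 * log 2)) := by field_simp; norm_num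
    _ ≤ 4 * β / ℓ * ((N * tanh (Z / (2 * N)) + 1) / (2 * log 2)) := by
        gcongr
        linarith
    _ ≤ miBits p := hinfo

end ExtremalFamily

section Distillation

lemma ID_le {M K : ℕ} {β v : ℝ} {p : Fin K → ℕ → ℝ} (hp : IsJointPMF p) (hβ : β ≤ miBits p)
    (hv : quantMI p M ≤ v) : ID M K β ≤ v := by
  refine le_trans (csInf_le ⟨0, ?_⟩ ⟨p, hp, hβ, rfl⟩) hv
  rintro _ ⟨q, hq, -, rfl⟩
  exact hq.quantMI_nonneg M

lemma mul_fLower_le_ID {β : ℝ} (hβ0 : 0 < β) (hβ1 : β ≤ 1) (k : ℕ) :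
    β * fLower (k / max (logb 2 (1 / β)) 1) ≤ ID (k + 1) 2 β := by
  obtain ⟨p, hp, hpβ⟩ := exists_isJointPMF_miBits_eq hβ0.le hβ1
  refine le_csInf ⟨_, p, hp, hpβ.ge, rfl⟩ ?_
  rintro _ ⟨q, hq, hqβ, rfl⟩
  exact hq.mul_fLower_le_quantMI hβ0 hqβ k

lemma ID_le_self {β : ℝ} (hβ0 : 0 ≤ β) (hβ1 : β ≤ 1) (M : ℕ) : ID M 2 β ≤ β := by
  obtain ⟨p, hp, hpβ⟩ := exists_isJointPMF_miBits_eq hβ0 hβ1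
  exact ID_le hp hpβ.ge ((hp.quantMI_le_miBits M).trans_eq hpβ)

lemma ID_one_nonpos {β : ℝ} (hβ0 : 0 ≤ β) (hβ1 : β ≤ 1) : ID 1 2 β ≤ 0 := by
  obtain ⟨p, hp, hpβ⟩ := exists_isJointPMF_miBits_eq hβ0 hβ1
  exact ID_le hp hpβ.ge hp.quantMI_one.le

lemma ID_le_mul_three_mul {β : ℝ} (hβ0 : 0 < β) (hβ1 : β ≤ 1) (k : ℕ) :
    ID (k + 1) 2 β ≤ β * (3 * (k / max (logb 2 (1 / β)) 1)) := by
  have hself := ID_le_self hβ0.le hβ1 (k + 1)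
  rcases le_or_gt (logb 2 (1 / β)) 3 with hℓ | hℓ
  · rcases k.eq_zero_or_pos with rfl | hk
    · simpa using ID_one_nonpos hβ0.le hβ1
    · refine hself.trans (le_mul_of_one_le_right hβ0.le ?_)
      rw [← mul_div_assoc, one_le_div (by positivity)]
      have hk1 : (1 : ℝ) ≤ k := Nat.one_le_cast.2 hk
      exact max_le (by linarith) (by linarith)
  · obtain ⟨p, hp, hpβ, hquant⟩ := exists_isJointPMF_quantMI_le hβ0 hℓ
    rw [max_eq_left (by linarith)]
    exact ID_le hp hpβ (hquant k)

end Distillation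

/-- Theorem 1: characterization of the binary information distillation function. -/
theorem binary_information_distillation (β : ℝ) (hβ0 : 0 < β) (hβ1 : β ≤ 1)
    (M : ℕ) (hM : 0 < M) :
    β * fLower (((M : ℝ) - 1) / max (Real.logb 2 (1 / β)) 1) ≤ ID M 2 β ∧
    ID M 2 β ≤ β * fUpper (((M : ℝ) - 1) / max (Real.logb 2 (1 / β)) 1) := by
  obtain ⟨k, rfl⟩ : ∃ k, M = k + 1 := Nat.exists_eq_add_of_le' hM
  rw [Nat.cast_add_one, add_sub_cancel_right]
  refine ⟨mul_fLower_le_ID hβ0 hβ1 k, ?_⟩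
  rw [fUpper, mul_min_of_nonneg _ _ hβ0.le, mul_one]
  exact le_min (ID_le_mul_three_mul hβ0 hβ1 k) (ID_le_self hβ0.le hβ1 (k + 1))
end

section
/- For every positive integer K, every β > 0, and every positive integer M, the infimum of I(X;[Y]_M) over all joint distributions P_{XY} with |𝒳| = K and I(X;Y) ≥ β equals the infimum of I(X;[Y]_M) over all joint distributions P_{XY} with |𝒳| = K and I(X;Y) = β. -/
open scoped BigOperators

/-!
The idea is erasure. Given `(X, Y)` with `I(X;Y) ≥ β`, put `t = β / I(X;Y) ∈ (0, 1]` and let `Y'`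
equal `Y` with probability `t` and an erasure symbol with probability `1 - t`, independently of
`(X, Y)`. Then `I(X;Y') = t * I(X;Y) = β` exactly. A quantizer `f` of `Y'` restricts to a quantizer
`g` of `Y`, and the law of `(X, f(Y'))` is the mixture, with weights `t` and `1 - t`, of the law of
`(X, g(Y))` and a product law with the same `X`-marginal. Mutual information is convex along such
mixtures, so `I(X; f(Y')) ≤ t * I(X; g(Y)) ≤ I(X; g(Y))`: erasing does not increase `I(X;[Y]_M)`.
-/

theorem hasSum_option {α N : Type*} [AddCommMonoid N] [TopologicalSpace N] [ContinuousAdd N]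
    {f : Option α → N} {a : N} (h : HasSum (fun i => f (some i)) a) : HasSum f (a + f none) := by
  rw [← (Equiv.optionEquivSumPUnit.{0} α).symm.hasSum_iff]
  exact HasSum.sum h (hasSum_unique _)

theorem eq_zero_of_mul_eq_zero_of_le
    {R : Type*} [MulZeroClass R] [NoZeroDivisors R] [PartialOrder R]
    {u a b : R} (hu : 0 ≤ u) (ha : u ≤ a) (hb : u ≤ b) (hab : a * b = 0) : u = 0 := by
  rcases mul_eq_zero.1 hab with rfl | rfl
  exacts [ha.antisymm hu, hb.antisymm hu]

section KLTerm

/-- The contribution of one symbol to the relative entropy (in bits), where the symbol has mass `u`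
under the first law and `v` under the second. It is `0` when `u = 0`, but also when `v = 0 < u`,
where the relative entropy is infinite. -/
noncomputable def klTerm (u v : ℝ) : ℝ :=
  u * Real.logb 2 (u / v)

@[simp]
theorem klTerm_zero_left (v : ℝ) : klTerm 0 v = 0 :=
  zero_mul _

@[simp]
theorem klTerm_self (u : ℝ) : klTerm u u = 0 := by
  by_cases hu : u = 0 <;> simp [klTerm, hu]

theorem klTerm_mul_left (t u v : ℝ) : klTerm (t * u) (t * v) = t * klTerm u v := by
  by_cases ht : t = 0
  · simp [ht]
  · rw [klTerm, klTerm, mul_div_mul_left _ _ ht, mul_assoc]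

theorem sub_div_log_two_le_klTerm {u v : ℝ} (hu : 0 ≤ u) (hv : 0 ≤ v) (huv : v = 0 → u = 0) :
    (u - v) / Real.log 2 ≤ klTerm u v := by
  rw [klTerm, Real.logb, ← mul_div_assoc]
  gcongr
  rcases hu.eq_or_lt with rfl | hu
  · simpa using hv
  have hv : 0 < v := hv.lt_of_ne' fun h => hu.ne' (huv h)
  calc u - v = u * (1 - (u / v)⁻¹) := by field_simp
    _ ≤ u * Real.log (u / v) := by gcongr; exact Real.one_sub_inv_le_log_of_pos (by positivity)

theorem klTerm_mul_le {u a b : ℝ} (hu : 0 ≤ u) (ha : u ≤ a) (hb : u ≤ b) :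
    klTerm u (a * b) ≤ u / b / Real.log 2 := by
  rw [klTerm, Real.logb, ← mul_div_assoc]
  gcongr
  have hb₀ : 0 ≤ b := hu.trans hb
  calc u * Real.log (u / (a * b)) ≤ u * (u / (a * b)) := by
        gcongr
        exact Real.log_le_self (div_nonneg hu (mul_nonneg (hu.trans ha) hb₀))
    _ = (u / a) * (u / b) := by rw [div_mul_div_comm, mul_div_assoc]
    _ ≤ u / b := mul_le_of_le_one_left (by positivity) (div_le_one_of_le₀ ha (hu.trans ha))

/-- The two-term log-sum inequality: it is the convexity of `x * log x` at the points `u / v` and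
`u' / v'` with weights `v / (v + v')` and `v' / (v + v')`. -/
theorem klTerm_add_le {u v u' v' : ℝ} (hu : 0 ≤ u) (hv : 0 ≤ v) (huv : v = 0 → u = 0)
    (hu' : 0 ≤ u') (hv' : 0 ≤ v') (huv' : v' = 0 → u' = 0) :
    klTerm (u + u') (v + v') ≤ klTerm u v + klTerm u' v' := by
  rcases hv.eq_or_lt with rfl | hv
  · simp [huv rfl]
  rcases hv'.eq_or_lt with rfl | hv'
  · simp [huv' rfl]
  have hconv := Real.convexOn_mul_log.2 (div_nonneg hu hv.le) (div_nonneg hu' hv'.le)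
    (div_nonneg hv.le (add_pos hv hv').le) (div_nonneg hv'.le (add_pos hv hv').le)
    (by field_simp)
  have hpoint : v / (v + v') * (u / v) + v' / (v + v') * (u' / v') = (u + u') / (v + v') := by
    field_simp
  rw [smul_eq_mul, smul_eq_mul, smul_eq_mul, smul_eq_mul, hpoint] at hconv
  simp only [klTerm, Real.logb, ← mul_div_assoc, ← add_div]
  gcongr
  calc (u + u') * Real.log ((u + u') / (v + v'))
      = (v + v') * ((u + u') / (v + v') * Real.log ((u + u') / (v + v'))) := by field_simp
    _ ≤ (v + v') * (v / (v + v') * (u / v * Real.log (u / v)) +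
          v' / (v + v') * (u' / v' * Real.log (u' / v'))) := by gcongr
    _ = u * Real.log (u / v) + u' * Real.log (u' / v') := by field_simp

theorem klTerm_convexComb_le {a p b q c t s : ℝ} (hp : 0 ≤ p) (hpa : p ≤ a) (hpb : p ≤ b)
    (hq : 0 ≤ q) (hqa : q ≤ a) (hqc : q ≤ c) (ht : 0 ≤ t) (hs : 0 ≤ s) :
    klTerm (t * p + s * q) (a * (t * b + s * c)) ≤
      t * klTerm p (a * b) + s * klTerm q (a * c) := by
  have ha : 0 ≤ a := hp.trans hpa
  have hb : 0 ≤ b := hp.trans hpb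
  have hc : 0 ≤ c := hq.trans hqc
  have hsplit : a * (t * b + s * c) = t * (a * b) + s * (a * c) := by ring
  rw [hsplit, ← klTerm_mul_left, ← klTerm_mul_left]
  refine klTerm_add_le (by positivity) (by positivity) (fun h => ?_) (by positivity)
    (by positivity) (fun h => ?_)
  · exact mul_eq_zero.2 <| (mul_eq_zero.1 h).imp_right <| eq_zero_of_mul_eq_zero_of_le hp hpa hpb
  · exact mul_eq_zero.2 <| (mul_eq_zero.1 h).imp_right <| eq_zero_of_mul_eq_zero_of_le hq hqa hqc

end KLTerm

section JointPMF

variable {𝒳 𝒴 𝒵 : Type*} {p q : 𝒳 → 𝒴 → ℝ}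

/-- The law of `X` when `(X, Y) ~ p`. -/
noncomputable def fstMarginal (p : 𝒳 → 𝒴 → ℝ) (x : 𝒳) : ℝ :=
  ∑' y, p x y

/-- The law of `Y` when `(X, Y) ~ p`. -/
noncomputable def sndMarginal (p : 𝒳 → 𝒴 → ℝ) (y : 𝒴) : ℝ :=
  ∑' x, p x y

theorem miBits_eq_tsum_klTerm (p : 𝒳 → 𝒴 → ℝ) :
    miBits p = ∑' x, ∑' y, klTerm (p x y) (fstMarginal p x * sndMarginal p y) :=
  rfl

theorem isJointPMF_iff_hasSum :
    IsJointPMF p ↔ (∀ x y, 0 ≤ p x y) ∧ HasSum (fun xy : 𝒳 × 𝒴 => p xy.1 xy.2) 1 := by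
  refine and_congr_right fun _ => ⟨fun h => ?_, fun h => ⟨h.summable, ?_⟩⟩
  · rw [← h.2, ← h.1.tsum_prod]
    exact h.1.hasSum
  · rw [← h.summable.tsum_prod, h.tsum_eq]

namespace IsJointPMF

theorem nonneg (hp : IsJointPMF p) (x : 𝒳) (y : 𝒴) : 0 ≤ p x y :=
  hp.1 x y

theorem hasSum (hp : IsJointPMF p) : HasSum (fun xy : 𝒳 × 𝒴 => p xy.1 xy.2) 1 :=
  (isJointPMF_iff_hasSum.1 hp).2

theorem hasSum_row (hp : IsJointPMF p) (x : 𝒳) : HasSum (p x) (fstMarginal p x) :=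
  (hp.2.1.prod_factor x).hasSum

theorem hasSum_col (hp : IsJointPMF p) (y : 𝒴) : HasSum (fun x => p x y) (sndMarginal p y) :=
  (hp.2.1.prod_symm.prod_factor y).hasSum

theorem hasSum_fstMarginal (hp : IsJointPMF p) : HasSum (fstMarginal p) 1 :=
  hp.hasSum.prod_fiberwise hp.hasSum_row

theorem le_fstMarginal (hp : IsJointPMF p) (x : 𝒳) (y : 𝒴) : p x y ≤ fstMarginal p x :=
  le_hasSum (hp.hasSum_row x) y fun _ _ => hp.nonneg x _

theorem le_sndMarginal (hp : IsJointPMF p) (x : 𝒳) (y : 𝒴) : p x y ≤ sndMarginal p y :=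
  le_hasSum (hp.hasSum_col y) x fun _ _ => hp.nonneg _ y

theorem fstMarginal_nonneg (hp : IsJointPMF p) (x : 𝒳) : 0 ≤ fstMarginal p x :=
  tsum_nonneg (hp.nonneg x)

theorem sndMarginal_nonneg (hp : IsJointPMF p) (y : 𝒴) : 0 ≤ sndMarginal p y :=
  tsum_nonneg fun x => hp.nonneg x y

theorem of_hasSum_row {r : 𝒳 → 𝒵 → ℝ} (hp : IsJointPMF p) (hr : ∀ x z, 0 ≤ r x z)
    (hrow : ∀ x, HasSum (r x) (fstMarginal p x)) : IsJointPMF r := by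
  have hrow_eq : (fun x => ∑' z, r x z) = fstMarginal p := funext fun x => (hrow x).tsum_eq
  refine ⟨hr, (summable_prod_of_nonneg fun xz => hr xz.1 xz.2).2
    ⟨fun x => (hrow x).summable, ?_⟩, ?_⟩
  · exact hrow_eq ▸ hp.hasSum_fstMarginal.summable
  · rw [hrow_eq, hp.hasSum_fstMarginal.tsum_eq]

theorem prod {a : 𝒳 → ℝ} {b : 𝒴 → ℝ} (ha : ∀ x, 0 ≤ a x) (ha₁ : HasSum a 1) (hb : ∀ y, 0 ≤ b y)
    (hb₁ : HasSum b 1) : IsJointPMF fun x y => a x * b y :=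
  isJointPMF_iff_hasSum.2 ⟨fun x y => mul_nonneg (ha x) (hb y), by
    simpa using ha₁.mul hb₁ (ha₁.summable.mul_of_nonneg hb₁.summable ha hb)⟩

theorem le_klTerm (hp : IsJointPMF p) (x : 𝒳) (y : 𝒴) :
    (p x y - fstMarginal p x * sndMarginal p y) / Real.log 2 ≤
      klTerm (p x y) (fstMarginal p x * sndMarginal p y) :=
  sub_div_log_two_le_klTerm (hp.nonneg x y)
    (mul_nonneg (hp.fstMarginal_nonneg x) (hp.sndMarginal_nonneg y))
    (eq_zero_of_mul_eq_zero_of_le (hp.nonneg x y) (hp.le_fstMarginal x y) (hp.le_sndMarginal x y))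

theorem klTerm_le (hp : IsJointPMF p) (x : 𝒳) (y : 𝒴) :
    klTerm (p x y) (fstMarginal p x * sndMarginal p y) ≤
      p x y / sndMarginal p y / Real.log 2 :=
  klTerm_mul_le (hp.nonneg x y) (hp.le_fstMarginal x y) (hp.le_sndMarginal x y)

theorem summable_klTerm_col (hp : IsJointPMF p) (y : 𝒴) :
    Summable fun x => klTerm (p x y) (fstMarginal p x * sndMarginal p y) := by
  have hcol := (hp.hasSum_col y).summable
  have hlower : Summable fun x =>
      (p x y - fstMarginal p x * sndMarginal p y) / Real.log 2 :=
    (hcol.sub (hp.hasSum_fstMarginal.summable.mul_right _)).div_const _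
  have hupper : Summable fun x => p x y / sndMarginal p y / Real.log 2 :=
    (hcol.div_const _).div_const _
  have hdiff := Summable.of_nonneg_of_le
    (fun x => sub_nonneg.2 (hp.le_klTerm x y))
    (fun x => sub_le_sub_right (hp.klTerm_le x y) _) (hupper.sub hlower)
  simpa using hdiff.add hlower

end IsJointPMF

theorem convex_setOf_isJointPMF : Convex ℝ {p : 𝒳 → 𝒴 → ℝ | IsJointPMF p} := by
  intro p hp q hq t s ht hs hts
  refine isJointPMF_iff_hasSum.2 ⟨fun x y => ?_, ?_⟩
  · exact add_nonneg (mul_nonneg ht (hp.nonneg x y)) (mul_nonneg hs (hq.nonneg x y))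
  · simpa [hts] using (hp.hasSum.mul_left t).add (hq.hasSum.mul_left s)

theorem fstMarginal_convexComb (hp : IsJointPMF p) (hq : IsJointPMF q) (t s : ℝ) :
    fstMarginal (t • p + s • q) = t • fstMarginal p + s • fstMarginal q :=
  funext fun x => (((hp.hasSum_row x).mul_left t).add ((hq.hasSum_row x).mul_left s)).tsum_eq

theorem sndMarginal_convexComb (hp : IsJointPMF p) (hq : IsJointPMF q) (t s : ℝ) :
    sndMarginal (t • p + s • q) = t • sndMarginal p + s • sndMarginal q :=
  funext fun y => (((hp.hasSum_col y).mul_left t).add ((hq.hasSum_col y).mul_left s)).tsum_eq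

end JointPMF

section MutualInformation

variable {𝒳 𝒴 : Type*} {p q : 𝒳 → 𝒴 → ℝ}

theorem fstMarginal_prod (a : 𝒳 → ℝ) {b : 𝒴 → ℝ} (hb : HasSum b 1) :
    fstMarginal (fun x y => a x * b y) = a :=
  funext fun x => by rw [fstMarginal, tsum_mul_left, hb.tsum_eq, mul_one]

theorem sndMarginal_prod {a : 𝒳 → ℝ} (ha : HasSum a 1) (b : 𝒴 → ℝ) :
    sndMarginal (fun x y => a x * b y) = b :=
  funext fun y => by rw [sndMarginal, tsum_mul_right, ha.tsum_eq, one_mul]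

theorem miBits_prod {a : 𝒳 → ℝ} {b : 𝒴 → ℝ} (ha : HasSum a 1) (hb : HasSum b 1) :
    miBits (fun x y => a x * b y) = 0 := by
  simp [miBits_eq_tsum_klTerm, fstMarginal_prod a hb, sndMarginal_prod ha b]

theorem miBits_eq_sum_tsum [Fintype 𝒴] (hp : IsJointPMF p) :
    miBits p = ∑ y, ∑' x, klTerm (p x y) (fstMarginal p x * sndMarginal p y) := by
  rw [← Summable.tsum_finsetSum fun y _ => hp.summable_klTerm_col y, miBits_eq_tsum_klTerm]
  simp only [tsum_fintype]

theorem miBits_nonneg [Finite 𝒴] (hp : IsJointPMF p) : 0 ≤ miBits p := by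
  have := Fintype.ofFinite 𝒴
  have hlower (y : 𝒴) : HasSum (fun x =>
      (p x y - fstMarginal p x * sndMarginal p y) / Real.log 2) 0 := by
    simpa using
      ((hp.hasSum_col y).sub (hp.hasSum_fstMarginal.mul_right (sndMarginal p y))).div_const
        (Real.log 2)
  rw [miBits_eq_sum_tsum hp]
  exact Finset.sum_nonneg fun y _ => hasSum_le (fun x => hp.le_klTerm x y)
    (hlower y) (hp.summable_klTerm_col y).hasSum

theorem miBits_le_card_div_log_two [Finite 𝒴] (hp : IsJointPMF p) :
    miBits p ≤ Nat.card 𝒴 / Real.log 2 := by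
  have := Fintype.ofFinite 𝒴
  have hcol (y : 𝒴) :
      ∑' x, klTerm (p x y) (fstMarginal p x * sndMarginal p y) ≤ 1 / Real.log 2 := calc
    _ ≤ sndMarginal p y / sndMarginal p y / Real.log 2 :=
      hasSum_le (fun x => hp.klTerm_le x y) (hp.summable_klTerm_col y).hasSum
        (((hp.hasSum_col y).div_const _).div_const _)
    _ ≤ 1 / Real.log 2 := by gcongr; exact div_self_le_one _
  calc miBits p ≤ ∑ _y : 𝒴, 1 / Real.log 2 := by
        rw [miBits_eq_sum_tsum hp]
        exact Finset.sum_le_sum fun y _ => hcol y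
    _ = Nat.card 𝒴 / Real.log 2 := by simp [div_eq_mul_inv]

theorem miBits_convexComb_le [Finite 𝒴] (hp : IsJointPMF p) (hq : IsJointPMF q)
    (hpq : fstMarginal p = fstMarginal q) {t s : ℝ} (ht : 0 ≤ t) (hs : 0 ≤ s) (hts : t + s = 1) :
    miBits (t • p + s • q) ≤ t * miBits p + s * miBits q := by
  have := Fintype.ofFinite 𝒴
  have hmix : IsJointPMF (t • p + s • q) := convex_setOf_isJointPMF hp hq ht hs hts
  have hfst : fstMarginal (t • p + s • q) = fstMarginal p := by
    rw [fstMarginal_convexComb hp hq, ← hpq, ← add_smul, hts, one_smul]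
  rw [miBits_eq_sum_tsum hp, miBits_eq_sum_tsum hq, miBits_eq_sum_tsum hmix, Finset.mul_sum,
    Finset.mul_sum, ← Finset.sum_add_distrib]
  refine Finset.sum_le_sum fun y _ => hasSum_le (fun x => ?_) (hmix.summable_klTerm_col y).hasSum
    (((hp.summable_klTerm_col y).hasSum.mul_left t).add
      ((hq.summable_klTerm_col y).hasSum.mul_left s))
  rw [hfst, sndMarginal_convexComb hp hq, ← hpq]
  exact klTerm_convexComb_le (hp.nonneg x y) (hp.le_fstMarginal x y) (hp.le_sndMarginal x y)
    (hq.nonneg x y) (hpq ▸ hq.le_fstMarginal x y) (hq.le_sndMarginal x y) ht hs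

end MutualInformation

section Quantizer

variable {𝒳 𝒴 : Type*} {p : 𝒳 → 𝒴 → ℝ} {M : ℕ}

theorem hasSum_ite_quantJoint (hp : IsJointPMF p) (f : 𝒴 → Fin M) (x : 𝒳) (m : Fin M) :
    HasSum (fun y => if f y = m then p x y else 0) (quantJoint p f x m) :=
  ((hp.hasSum_row x).summable.indicator {y | f y = m}).congr
    (fun _ => Set.indicator_apply _ _ _) |>.hasSum

theorem hasSum_quantJoint (hp : IsJointPMF p) (f : 𝒴 → Fin M) (x : 𝒳) :
    HasSum (quantJoint p f x) (fstMarginal p x) := by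
  have hswap : HasSum (p x) (∑ m, quantJoint p f x m) := by
    simpa using hasSum_sum fun m (_ : m ∈ Finset.univ) => hasSum_ite_quantJoint hp f x m
  exact hswap.unique (hp.hasSum_row x) ▸ hasSum_fintype _

theorem fstMarginal_quantJoint (hp : IsJointPMF p) (f : 𝒴 → Fin M) :
    fstMarginal (quantJoint p f) = fstMarginal p :=
  funext fun x => (hasSum_quantJoint hp f x).tsum_eq

theorem isJointPMF_quantJoint (hp : IsJointPMF p) (f : 𝒴 → Fin M) :
    IsJointPMF (quantJoint p f) :=
  hp.of_hasSum_row
    (fun x _ => tsum_nonneg fun y => by split_ifs; exacts [hp.nonneg x y, le_rfl])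
    (hasSum_quantJoint hp f)

theorem bddAbove_range_miBits_quantJoint (hp : IsJointPMF p) (M : ℕ) :
    BddAbove (Set.range fun f : 𝒴 → Fin M => miBits (quantJoint p f)) :=
  ⟨Nat.card (Fin M) / Real.log 2, Set.forall_mem_range.2 fun f =>
    miBits_le_card_div_log_two (isJointPMF_quantJoint hp f)⟩

end Quantizer

section Erasure

variable {𝒳 𝒴 : Type*} {p : 𝒳 → 𝒴 → ℝ} {t : ℝ} {M : ℕ}

/-- The joint law of `X` and the output of an erasure channel fed with `Y`, when `(X, Y) ~ p`: with
probability `1 - t`, independently of `(X, Y)`, the symbol `Y` is replaced by the erasure `none`. -/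
noncomputable def erasureJoint (p : 𝒳 → 𝒴 → ℝ) (t : ℝ) (x : 𝒳) : Option 𝒴 → ℝ
  | none => (1 - t) * fstMarginal p x
  | some y => t * p x y

theorem hasSum_erasureJoint (hp : IsJointPMF p) (t : ℝ) (x : 𝒳) :
    HasSum (erasureJoint p t x) (fstMarginal p x) := by
  have hsum : t * fstMarginal p x + (1 - t) * fstMarginal p x = fstMarginal p x := by ring
  exact hsum ▸ hasSum_option ((hp.hasSum_row x).mul_left t)

theorem isJointPMF_erasureJoint (hp : IsJointPMF p) (ht₀ : 0 ≤ t) (ht₁ : t ≤ 1) :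
    IsJointPMF (erasureJoint p t) := by
  refine hp.of_hasSum_row (fun x o => ?_) (hasSum_erasureJoint hp t)
  cases o with
  | none => exact mul_nonneg (sub_nonneg.2 ht₁) (hp.fstMarginal_nonneg x)
  | some y => exact mul_nonneg ht₀ (hp.nonneg x y)

theorem fstMarginal_erasureJoint (hp : IsJointPMF p) (t : ℝ) :
    fstMarginal (erasureJoint p t) = fstMarginal p :=
  funext fun x => (hasSum_erasureJoint hp t x).tsum_eq

theorem sndMarginal_erasureJoint_none (hp : IsJointPMF p) (t : ℝ) :
    sndMarginal (erasureJoint p t) none = 1 - t := by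
  simp [sndMarginal, erasureJoint, tsum_mul_left, hp.hasSum_fstMarginal.tsum_eq]

theorem sndMarginal_erasureJoint_some (p : 𝒳 → 𝒴 → ℝ) (t : ℝ) (y : 𝒴) :
    sndMarginal (erasureJoint p t) (some y) = t * sndMarginal p y :=
  tsum_mul_left

theorem miBits_erasureJoint (hp : IsJointPMF p) (t : ℝ) :
    miBits (erasureJoint p t) = t * miBits p := by
  have hnone (x : 𝒳) : klTerm (erasureJoint p t x none)
      (fstMarginal (erasureJoint p t) x * sndMarginal (erasureJoint p t) none) = 0 := by
    rw [fstMarginal_erasureJoint hp, sndMarginal_erasureJoint_none hp, mul_comm,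
      erasureJoint, klTerm_self]
  have hsome (x : 𝒳) (y : 𝒴) : klTerm (erasureJoint p t x (some y))
      (fstMarginal (erasureJoint p t) x * sndMarginal (erasureJoint p t) (some y)) =
        t * klTerm (p x y) (fstMarginal p x * sndMarginal p y) := by
    rw [fstMarginal_erasureJoint hp, sndMarginal_erasureJoint_some, mul_left_comm,
      erasureJoint, klTerm_mul_left]
  simp only [miBits_eq_tsum_klTerm, ← tsum_mul_left, ← hsome]
  refine tsum_congr fun x => ((Option.some_injective 𝒴).tsum_eq fun o ho => ?_).symm
  cases o with
  | none => exact absurd (hnone x) ho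
  | some y => exact Set.mem_range_self y

theorem quantJoint_erasureJoint (hp : IsJointPMF p) (t : ℝ) (f : Option 𝒴 → Fin M) :
    quantJoint (erasureJoint p t) f = t • quantJoint p (fun y => f (some y)) +
      (1 - t) • fun x m => fstMarginal p x * (Pi.single (f none) 1 : Fin M → ℝ) m := by
  ext x m
  have hsome : HasSum (fun y => if f (some y) = m then erasureJoint p t x (some y) else 0)
      (t * quantJoint p (fun y => f (some y)) x m) := by
    simpa [erasureJoint] using (hasSum_ite_quantJoint hp (fun y => f (some y)) x m).mul_left t
  have hall := hasSum_option (f := fun o => if f o = m then erasureJoint p t x o else 0) hsome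
  rw [quantJoint, hall.tsum_eq]
  simp [erasureJoint, Pi.single_apply, eq_comm]

theorem miBits_quantJoint_erasureJoint_le (hp : IsJointPMF p) (ht₀ : 0 ≤ t) (ht₁ : t ≤ 1)
    (f : Option 𝒴 → Fin M) :
    miBits (quantJoint (erasureJoint p t) f) ≤ t * miBits (quantJoint p fun y => f (some y)) := by
  have hδ : HasSum (Pi.single (f none) 1 : Fin M → ℝ) 1 := hasSum_pi_single _ _
  have hprod : IsJointPMF fun x m => fstMarginal p x * (Pi.single (f none) 1 : Fin M → ℝ) m :=
    .prod hp.fstMarginal_nonneg hp.hasSum_fstMarginal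
      (Pi.single_nonneg.2 zero_le_one : (0 : Fin M → ℝ) ≤ _) hδ
  have hfst : fstMarginal (quantJoint p fun y => f (some y)) =
      fstMarginal fun x m => fstMarginal p x * (Pi.single (f none) 1 : Fin M → ℝ) m := by
    rw [fstMarginal_quantJoint hp, fstMarginal_prod _ hδ]
  rw [quantJoint_erasureJoint hp]
  simpa [miBits_prod hp.hasSum_fstMarginal hδ] using
    miBits_convexComb_le (isJointPMF_quantJoint hp _) hprod hfst ht₀ (sub_nonneg.2 ht₁)
      (add_sub_cancel _ _)

theorem quantMI_erasureJoint_le [NeZero M] (hp : IsJointPMF p) (ht₀ : 0 ≤ t) (ht₁ : t ≤ 1) :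
    quantMI (erasureJoint p t) M ≤ quantMI p M := by
  refine ciSup_le fun f => ?_
  calc miBits (quantJoint (erasureJoint p t) f)
      ≤ t * miBits (quantJoint p fun y => f (some y)) :=
        miBits_quantJoint_erasureJoint_le hp ht₀ ht₁ f
    _ ≤ miBits (quantJoint p fun y => f (some y)) :=
        mul_le_of_le_one_left (miBits_nonneg (isJointPMF_quantJoint hp _)) ht₁
    _ ≤ quantMI p M := le_ciSup (bddAbove_range_miBits_quantJoint hp M) fun y => f (some y)

end Erasure

section Relabelling

variable {𝒳 𝒴 𝒵 : Type*} {p : 𝒳 → 𝒴 → ℝ}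

theorem isJointPMF_comp_equiv (hp : IsJointPMF p) (e : 𝒵 ≃ 𝒴) :
    IsJointPMF fun x z => p x (e z) :=
  hp.of_hasSum_row (fun x _ => hp.nonneg x _) fun x => e.hasSum_iff.2 (hp.hasSum_row x)

theorem miBits_comp_equiv (p : 𝒳 → 𝒴 → ℝ) (e : 𝒵 ≃ 𝒴) :
    miBits (fun x z => p x (e z)) = miBits p := by
  have hfst : fstMarginal (fun x z => p x (e z)) = fstMarginal p :=
    funext fun x => e.tsum_eq (p x)
  rw [miBits_eq_tsum_klTerm, hfst]
  exact tsum_congr fun x => e.tsum_eq fun y => klTerm (p x y) (fstMarginal p x * sndMarginal p y)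

theorem quantJoint_comp_equiv (p : 𝒳 → 𝒴 → ℝ) (e : 𝒵 ≃ 𝒴) {M : ℕ} (f : 𝒴 → Fin M) :
    quantJoint (fun x z => p x (e z)) (fun z => f (e z)) = quantJoint p f :=
  funext₂ fun x m => e.tsum_eq fun y => if f y = m then p x y else 0

theorem quantMI_comp_equiv (p : 𝒳 → 𝒴 → ℝ) (e : 𝒵 ≃ 𝒴) (M : ℕ) :
    quantMI (fun x z => p x (e z)) M = quantMI p M :=
  ((e.symm.arrowCongr (Equiv.refl (Fin M))).iSup_congr fun f =>
    congrArg miBits (quantJoint_comp_equiv p e f)).symm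

end Relabelling

theorem exists_miBits_eq_and_quantMI_le {𝒳 𝒴 : Type*} [Infinite 𝒴] {p : 𝒳 → 𝒴 → ℝ}
    (hp : IsJointPMF p) {β : ℝ} (hβ : 0 < β) (hβp : β ≤ miBits p) (M : ℕ) [NeZero M] :
    ∃ q : 𝒳 → 𝒴 → ℝ, IsJointPMF q ∧ miBits q = β ∧ quantMI q M ≤ quantMI p M := by
  obtain ⟨e⟩ : Nonempty (𝒴 ≃ Option 𝒴) := Cardinal.eq.1 <| by
    rw [Cardinal.mk_option, Cardinal.add_one_eq (Cardinal.aleph0_le_mk 𝒴)]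
  have hI : 0 < miBits p := hβ.trans_le hβp
  have ht₀ : 0 ≤ β / miBits p := div_nonneg hβ.le hI.le
  have ht₁ : β / miBits p ≤ 1 := div_le_one_of_le₀ hβp hI.le
  refine ⟨fun x y => erasureJoint p (β / miBits p) x (e y),
    isJointPMF_comp_equiv (isJointPMF_erasureJoint hp ht₀ ht₁) e, ?_, ?_⟩
  · rw [miBits_comp_equiv, miBits_erasureJoint hp, div_mul_cancel₀ _ hI.ne']
  · rw [quantMI_comp_equiv]
    exact quantMI_erasureJoint_le hp ht₀ ht₁

/-- For infinite `𝒳` and `𝒴` the mutual information can be infinite, and `miBits` is then `0`: such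
laws belong to neither set, since `0 < β`. -/
theorem inf_eq_inf_equality_constraint_general {𝒳 𝒴 : Type*} [Infinite 𝒴] {β : ℝ} (hβ : 0 < β)
    {M : ℕ} (hM : 0 < M) :
    sInf {v | ∃ p : 𝒳 → 𝒴 → ℝ, IsJointPMF p ∧ β ≤ miBits p ∧ v = quantMI p M} =
    sInf {v | ∃ p : 𝒳 → 𝒴 → ℝ, IsJointPMF p ∧ miBits p = β ∧ v = quantMI p M} := by
  have : NeZero M := ⟨hM.ne'⟩
  refine csInf_eq_csInf_of_forall_exists_le ?_ ?_
  · rintro _ ⟨p, hp, hβp, rfl⟩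
    obtain ⟨q, hq, hqβ, hqp⟩ := exists_miBits_eq_and_quantMI_le hp hβ hβp M
    exact ⟨_, ⟨q, hq, hqβ, rfl⟩, hqp⟩
  · rintro _ ⟨p, hp, hpβ, rfl⟩
    exact ⟨_, ⟨p, hp, hpβ.ge, rfl⟩, le_rfl⟩

/-- Corollary 2: the infimum defining `ID_M(K, β)` is unchanged if the constraint
`I(X;Y) ≥ β` is replaced by `I(X;Y) = β`. -/
theorem inf_eq_inf_equality_constraint (K : ℕ) (hK : 0 < K) (β : ℝ) (hβ : 0 < β)
    (M : ℕ) (hM : 0 < M) :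
    sInf {v | ∃ p : Fin K → ℕ → ℝ, IsJointPMF p ∧ β ≤ miBits p ∧ v = quantMI p M} =
    sInf {v | ∃ p : Fin K → ℕ → ℝ, IsJointPMF p ∧ miBits p = β ∧ v = quantMI p M} :=
  inf_eq_inf_equality_constraint_general hβ hM
end

section
/- For any β > 0 and any ε > 0, there exist two probability distributions P and Q on the natural numbers, with P absolutely continuous with respect to Q, such that D(P‖Q) = β and, for every positive integer M, ψ_M(P,Q) ≤ M · ε. -/
/-!
If `i` is the first point of positive `P`-mass in a cell of a quantizer, then the tail
`T i = P {i, i + 1, …}` bounds the `P`-mass of the cell and `Q i` bounds its `Q`-mass from below, so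
the cell contributes at most `max 0 (T i * log₂ (T i / Q i))` to the divergence. When `T i` is
comparable to `P i`, this is roughly what the single point `i` contributes to `D(P‖Q)`; so a
divergence spread evenly over many points, along which `P` decays geometrically, survives no
quantizer with few cells.

Take `P` to have an atom of mass `1 - δ` with log-likelihood ratio `0`, followed by points of mass
`δ 2⁻ⁿ`, with ratio `2ⁿ` for `1 ≤ n ≤ N` and `0` for `n > N`. Each of the points `1 ≤ n ≤ N`
contributes `δ`, so `D(P‖Q) = N δ`, with no error term if the mass that `Q` lacks goes to a point
outside the support of `P`. Let `N` be large and `δ = β / N`.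
-/

open scoped BigOperators

/-- KL divergence (in bits) between pmfs `P` and `Q`, with conventions `0 log(0/q) = 0`. -/
noncomputable def klBits {𝒴 : Type*} (P Q : 𝒴 → ℝ) : ℝ :=
  ∑' y, P y * Real.logb 2 (P y / Q y)

/-- `P` is a pmf on `𝒴`. -/
def IsPMF {𝒴 : Type*} (P : 𝒴 → ℝ) : Prop :=
  (∀ y, 0 ≤ P y) ∧ Summable P ∧ (∑' y, P y) = 1

/-- Pushforward pmf of `P` under `f`. -/
noncomputable def pushPMF {𝒴 : Type*} {M : ℕ} (P : 𝒴 → ℝ) (f : 𝒴 → Fin M) : Fin M → ℝ :=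
  fun m => ∑' y, if f y = m then P y else 0

lemma mul_logb_div_le_of_le {x a A b B c : ℝ} (hx : 1 < x) (ha : 0 ≤ a) (haA : a ≤ A)
    (hB : 0 < B) (hBb : B ≤ b) (hc : 0 ≤ c) (h : A * Real.logb x (A / B) ≤ c) :
    a * Real.logb x (a / b) ≤ c := by
  rcases ha.eq_or_lt with rfl | ha_pos
  · simpa using hc
  have hlog : Real.logb x (a / b) ≤ Real.logb x (A / B) :=
    Real.logb_le_logb_of_le hx (div_pos ha_pos (hB.trans_le hBb))
      (div_le_div₀ (ha.trans haA) haA hB hBb)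
  rcases le_total (Real.logb x (a / b)) 0 with hneg | hpos
  · exact (mul_nonpos_of_nonneg_of_nonpos ha hneg).trans hc
  · exact (mul_le_mul haA hlog hpos (ha.trans haA)).trans h

lemma logb_div_mul_rpow_neg {x a b : ℝ} (hx : 1 < x) (ha : a ≠ 0) (hb : b ≠ 0) (t : ℝ) :
    Real.logb x (a / (b * x ^ (-t))) = Real.logb x (a / b) + t := by
  have hx0 : 0 < x := one_pos.trans hx
  rw [← div_div, Real.logb_div (div_ne_zero ha hb) (by positivity), Real.logb_rpow hx0 hx.ne',
    sub_neg_eq_add]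

section Pushforward

variable {𝒴 : Type*} {M : ℕ}

lemma pushPMF_eq_tsum_indicator (P : 𝒴 → ℝ) (f : 𝒴 → Fin M) (m : Fin M) :
    pushPMF P f m = ∑' y, (f ⁻¹' {m}).indicator P y := by
  classical
  simp only [pushPMF, Set.indicator_apply, Set.mem_preimage, Set.mem_singleton_iff]

lemma pushPMF_nonneg {P : 𝒴 → ℝ} (hP : ∀ y, 0 ≤ P y) (f : 𝒴 → Fin M) (m : Fin M) :
    0 ≤ pushPMF P f m := by
  rw [pushPMF_eq_tsum_indicator]
  exact tsum_nonneg (Set.indicator_nonneg fun y _ => hP y)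

lemma le_pushPMF {P : 𝒴 → ℝ} (hP : ∀ y, 0 ≤ P y) (hsum : Summable P) (f : 𝒴 → Fin M) (y : 𝒴) :
    P y ≤ pushPMF P f (f y) := by
  rw [pushPMF_eq_tsum_indicator]
  simpa using (hsum.indicator (f ⁻¹' {f y})).le_tsum y
    fun z _ => Set.indicator_nonneg (fun w _ => hP w) z

lemma pushPMF_le_tsum_subtype {P : 𝒴 → ℝ} (hP : ∀ y, 0 ≤ P y) (hsum : Summable P)
    {f : 𝒴 → Fin M} {m : Fin M} {s : Set 𝒴} (hs : ∀ y, f y = m → P y ≠ 0 → y ∈ s) :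
    pushPMF P f m ≤ ∑' y : s, P y := by
  rw [pushPMF_eq_tsum_indicator, tsum_subtype]
  refine (hsum.indicator _).tsum_le_tsum (fun y => ?_) (hsum.indicator s)
  refine Set.indicator_apply_le' (fun hy => ?_) fun _ => Set.indicator_nonneg (fun z _ => hP z) y
  by_cases hPy : P y = 0
  · exact hPy.trans_le (Set.indicator_nonneg (fun z _ => hP z) y)
  · rw [Set.indicator_of_mem (hs y hy hPy)]

theorem klBits_pushPMF_le [LinearOrder 𝒴] [WellFoundedLT 𝒴] {P Q : 𝒴 → ℝ} (hP : IsPMF P)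
    (hQ : IsPMF Q) (hPQ : ∀ y, Q y = 0 → P y = 0) {c : ℝ} (hc : 0 ≤ c)
    (htail : ∀ i, P i ≠ 0 →
      (∑' y : Set.Ici i, P y) * Real.logb 2 ((∑' y : Set.Ici i, P y) / Q i) ≤ c)
    (f : 𝒴 → Fin M) : klBits (pushPMF P f) (pushPMF Q f) ≤ M * c := by
  suffices hcell : ∀ m, pushPMF P f m * Real.logb 2 (pushPMF P f m / pushPMF Q f m) ≤ c by
    simpa [klBits] using Finset.sum_le_card_nsmul Finset.univ _ c fun m _ => hcell m
  intro m
  rcases {y | f y = m ∧ P y ≠ 0}.eq_empty_or_nonempty with hempty | hne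
  · have hle : pushPMF P f m ≤ ∑' y : (∅ : Set 𝒴), P y :=
      pushPMF_le_tsum_subtype hP.1 hP.2.1 fun y hy hPy => hempty.subset ⟨hy, hPy⟩
    have hzero : pushPMF P f m = 0 := (hle.trans_eq tsum_empty).antisymm (pushPMF_nonneg hP.1 f m)
    simpa [hzero] using hc
  · obtain ⟨i, ⟨rfl, hPi⟩, hmin⟩ := wellFounded_lt.has_min _ hne
    have hQi : 0 < Q i := (hQ.1 i).lt_of_ne' (mt (hPQ i) hPi)
    exact mul_logb_div_le_of_le one_lt_two (pushPMF_nonneg hP.1 f _)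
      (pushPMF_le_tsum_subtype hP.1 hP.2.1 fun y hy hPy => not_lt.1 (hmin y ⟨hy, hPy⟩)) hQi
      (le_pushPMF hQ.1 hQ.2.1 f i) hc (htail i hPi)

end Pushforward

lemma tsum_Ici_eq_tsum_add {α : Type*} [AddCommMonoid α] [TopologicalSpace α] (u : ℕ → α) (n : ℕ) :
    ∑' y : Set.Ici n, u y = ∑' j, u (j + n) := by
  have hrange : Set.range (· + n) = Set.Ici n := by
    ext y
    simp [le_iff_exists_add', eq_comm]
  rw [← hrange, tsum_range u (add_left_injective n)]

/-- The pmf `P` translated by one, which frees the point `0` of mass. -/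
def shiftPMF (P : ℕ → ℝ) : ℕ → ℝ
  | 0 => 0
  | n + 1 => P n

/-- The pmf relative to which `shiftPMF P` has log-likelihood ratio `s n` (in bits) at `n + 1`.
The mass that this leaves over sits at `0`, where it does not affect the divergence. -/
noncomputable def tiltPMF (P s : ℕ → ℝ) : ℕ → ℝ
  | 0 => 1 - ∑' n, P n * 2 ^ (-s n)
  | n + 1 => P n * 2 ^ (-s n)

section Tilt

variable {P s : ℕ → ℝ}

lemma isPMF_shiftPMF (hP : IsPMF P) : IsPMF (shiftPMF P) := by
  have hsum : Summable (shiftPMF P) := (summable_nat_add_iff 1).1 hP.2.1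
  refine ⟨fun y => ?_, hsum, ?_⟩
  · cases y with
    | zero => exact le_rfl
    | succ n => exact hP.1 n
  · rw [hsum.tsum_eq_zero_add]
    simpa [shiftPMF] using hP.2.2

lemma isPMF_tiltPMF (hP : IsPMF P) (hs : ∀ n, 0 ≤ s n) : IsPMF (tiltPMF P s) := by
  have hnonneg (n : ℕ) : 0 ≤ P n * 2 ^ (-s n) := mul_nonneg (hP.1 n) (by positivity)
  have hle (n : ℕ) : P n * 2 ^ (-s n) ≤ P n := mul_le_of_le_one_right (hP.1 n)
    (Real.rpow_le_one_of_one_le_of_nonpos one_le_two (neg_nonpos.2 (hs n)))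
  have hsum : Summable fun n => P n * 2 ^ (-s n) := .of_nonneg_of_le hnonneg hle hP.2.1
  have hsum_tilt : Summable (tiltPMF P s) := (summable_nat_add_iff 1).1 hsum
  refine ⟨fun y => ?_, hsum_tilt, ?_⟩
  · cases y with
    | zero => exact sub_nonneg.2 ((hsum.tsum_le_tsum hle hP.2.1).trans_eq hP.2.2)
    | succ n => exact hnonneg n
  · rw [hsum_tilt.tsum_eq_zero_add]
    simp only [tiltPMF, sub_add_cancel]

lemma shiftPMF_eq_zero_of_tiltPMF_eq_zero (y : ℕ) (hy : tiltPMF P s y = 0) :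
    shiftPMF P y = 0 := by
  cases y with
  | zero => rfl
  | succ n => exact (mul_eq_zero.1 hy).resolve_right (by positivity)

lemma klBits_shiftPMF_tiltPMF (P s : ℕ → ℝ) :
    klBits (shiftPMF P) (tiltPMF P s) = ∑' n, P n * s n := by
  rw [klBits, ← Nat.succ_injective.tsum_eq]
  · refine tsum_congr fun n => ?_
    rcases eq_or_ne (P n) 0 with hn | hn
    · simp [shiftPMF, hn]
    · simp [shiftPMF, tiltPMF, logb_div_mul_rpow_neg one_lt_two hn hn, div_self hn]
  · intro y hy
    cases y with
    | zero => simp [shiftPMF] at hy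
    | succ n => exact ⟨n, rfl⟩

theorem klBits_pushPMF_shiftPMF_tiltPMF_le (hP : IsPMF P) (hs : ∀ n, 0 ≤ s n) {c : ℝ} (hc : 0 ≤ c)
    (htail : ∀ n, P n ≠ 0 →
      (∑' j, P (j + n)) * (Real.logb 2 ((∑' j, P (j + n)) / P n) + s n) ≤ c)
    {M : ℕ} (f : ℕ → Fin M) :
    klBits (pushPMF (shiftPMF P) f) (pushPMF (tiltPMF P s) f) ≤ M * c := by
  refine klBits_pushPMF_le (isPMF_shiftPMF hP) (isPMF_tiltPMF hP hs)
    shiftPMF_eq_zero_of_tiltPMF_eq_zero hc (fun y hy => ?_) f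
  cases y with
  | zero => exact absurd rfl hy
  | succ n =>
    have hPn : P n ≠ 0 := hy
    have htail_pos : 0 < ∑' j, P (j + n) :=
      ((summable_nat_add_iff n).2 hP.2.1).tsum_pos (fun j => hP.1 _) 0
        (by simpa using (hP.1 n).lt_of_ne' hPn)
    have hshift : ∑' y : Set.Ici (n + 1), shiftPMF P y = ∑' j, P (j + n) :=
      tsum_Ici_eq_tsum_add _ _
    rw [hshift, tiltPMF, logb_div_mul_rpow_neg one_lt_two htail_pos.ne' hPn]
    exact htail n hPn

end Tilt

/-- The pmf with mass `1 - δ` at `0` and the mass `δ` spread geometrically over the positive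
integers. -/
noncomputable def geomPMF (δ : ℝ) : ℕ → ℝ
  | 0 => 1 - δ
  | i + 1 => δ * (1 / 2) ^ (i + 1)

/-- The log-likelihood ratio `2 ^ n` at `n = 1, …, N`, and `0` elsewhere: the reciprocal of the
mass of `geomPMF δ` up to the factor `δ`, so that each of these points contributes `δ` to the
divergence. -/
def cappedLLR (N : ℕ) : ℕ → ℝ
  | 0 => 0
  | i + 1 => if i < N then 2 ^ (i + 1) else 0

lemma hasSum_geomPMF_tail (δ : ℝ) (i : ℕ) :
    HasSum (fun j => geomPMF δ (j + (i + 1))) (δ * (1 / 2) ^ i) := by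
  convert! hasSum_geometric_two' (δ * (1 / 2) ^ i) using 2 with j
  rw [← add_assoc, geomPMF, pow_succ, pow_add, one_div_pow 2 j]
  ring

lemma hasSum_geomPMF (δ : ℝ) : HasSum (geomPMF δ) 1 := by
  have htail : HasSum (fun j => geomPMF δ (j + 1)) δ := by simpa using hasSum_geomPMF_tail δ 0
  simpa [geomPMF] using (hasSum_nat_add_iff 1).1 htail

lemma isPMF_geomPMF {δ : ℝ} (h0 : 0 ≤ δ) (h1 : δ ≤ 1) : IsPMF (geomPMF δ) := by
  refine ⟨fun y => ?_, (hasSum_geomPMF δ).summable, (hasSum_geomPMF δ).tsum_eq⟩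
  cases y with
  | zero => exact sub_nonneg.2 h1
  | succ i => exact mul_nonneg h0 (by positivity)

lemma cappedLLR_nonneg (N n : ℕ) : 0 ≤ cappedLLR N n := by
  cases n with
  | zero => exact le_rfl
  | succ i =>
    rw [cappedLLR]
    positivity

lemma cappedLLR_succ_le (N i : ℕ) : cappedLLR N (i + 1) ≤ 2 ^ (i + 1) := by
  rw [cappedLLR]
  split_ifs
  exacts [le_rfl, by positivity]

lemma tsum_geomPMF_mul_cappedLLR (δ : ℝ) (N : ℕ) :
    ∑' n, geomPMF δ n * cappedLLR N n = N * δ := by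
  have hvanish : ∀ n ∉ Finset.range (N + 1), geomPMF δ n * cappedLLR N n = 0 := by
    rintro (_ | i) hn
    · simp at hn
    · have hi : ¬ i < N := by simpa using hn
      simp [cappedLLR, hi]
  have hterm : ∀ i ∈ Finset.range N, geomPMF δ (i + 1) * cappedLLR N (i + 1) = δ := by
    intro i hi
    rw [geomPMF, cappedLLR, if_pos (Finset.mem_range.1 hi), mul_assoc, ← mul_pow]
    norm_num
  rw [tsum_eq_sum hvanish, Finset.sum_range_succ', Finset.sum_congr rfl hterm]
  simp [cappedLLR]

lemma logb_two_one_div_one_sub_le {δ : ℝ} (h0 : 0 ≤ δ) (h1 : δ ≤ 1 / 2) :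
    Real.logb 2 (1 / (1 - δ)) ≤ 4 * δ := by
  have hpos : 0 < 1 - δ := by linarith
  have hlog : Real.log (1 / (1 - δ)) ≤ 2 * δ := by
    calc Real.log (1 / (1 - δ)) ≤ 1 / (1 - δ) - 1 := Real.log_le_sub_one_of_pos (by positivity)
      _ ≤ 2 * δ := by
        rw [sub_le_iff_le_add, div_le_iff₀ hpos]
        nlinarith
  have hlog_two : 1 / 2 ≤ Real.log 2 := by linarith [Real.log_two_gt_d9]
  rw [Real.logb, div_le_iff₀ (Real.log_pos one_lt_two)]
  calc Real.log (1 / (1 - δ)) ≤ 4 * δ * (1 / 2) := by linarith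
    _ ≤ 4 * δ * Real.log 2 := by gcongr

lemma geomPMF_tail_mul_le {δ : ℝ} (h0 : 0 < δ) (h1 : δ ≤ 1 / 2) (N n : ℕ) :
    (∑' j, geomPMF δ (j + n)) *
      (Real.logb 2 ((∑' j, geomPMF δ (j + n)) / geomPMF δ n) + cappedLLR N n) ≤ 4 * δ := by
  cases n with
  | zero =>
    simp only [add_zero, (hasSum_geomPMF δ).tsum_eq, one_mul, cappedLLR]
    exact logb_two_one_div_one_sub_le h0.le h1
  | succ i =>
    have hratio : δ * (1 / 2) ^ i / geomPMF δ (i + 1) = 2 := by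
      rw [geomPMF, pow_succ]
      field_simp
    have hpow : (1 / 2 : ℝ) ^ i ≤ 1 := pow_le_one₀ (by norm_num) (by norm_num)
    rw [(hasSum_geomPMF_tail δ i).tsum_eq, hratio, Real.logb_self_eq_one one_lt_two]
    calc δ * (1 / 2) ^ i * (1 + cappedLLR N (i + 1))
        ≤ δ * (1 / 2) ^ i * (1 + 2 ^ (i + 1)) := by
          gcongr
          exact cappedLLR_succ_le N i
      _ = δ * ((1 / 2) ^ i + 2) := by
          rw [pow_succ, one_div_pow]
          field_simp
      _ ≤ 4 * δ := by nlinarith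

/-- Proposition 6: for any `β, ε > 0` there exist pmfs `P ≪ Q` on `ℕ` with
`D(P‖Q) = β` and `ψ_M(P,Q) ≤ M ε` for every `M`. -/
theorem divergence_quantization_bad (β ε : ℝ) (hβ : 0 < β) (hε : 0 < ε) :
    ∃ P Q : ℕ → ℝ, IsPMF P ∧ IsPMF Q ∧ (∀ y, Q y = 0 → P y = 0) ∧
      klBits P Q = β ∧
      ∀ M : ℕ, 0 < M →
        (⨆ f : ℕ → Fin M, klBits (pushPMF P f) (pushPMF Q f)) ≤ (M : ℝ) * ε := by
  obtain ⟨N, hN⟩ := exists_nat_gt (β / min (ε / 4) (1 / 2))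
  have hδ₀ : 0 < min (ε / 4) (1 / 2) := lt_min (by positivity) (by norm_num)
  have hN_pos : (0 : ℝ) < N := (div_pos hβ hδ₀).trans hN
  set δ := β / N
  have hδ : 0 < δ := div_pos hβ hN_pos
  have hδ_lt : δ < min (ε / 4) (1 / 2) := (div_lt_comm₀ hδ₀ hN_pos).1 hN
  obtain ⟨hδε, hδ_half⟩ := lt_min_iff.1 hδ_lt
  have hP : IsPMF (geomPMF δ) := isPMF_geomPMF hδ.le (by linarith)
  refine ⟨shiftPMF (geomPMF δ), tiltPMF (geomPMF δ) (cappedLLR N), isPMF_shiftPMF hP,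
    isPMF_tiltPMF hP (cappedLLR_nonneg N), shiftPMF_eq_zero_of_tiltPMF_eq_zero, ?_, fun M hM => ?_⟩
  · rw [klBits_shiftPMF_tiltPMF, tsum_geomPMF_mul_cappedLLR, mul_div_cancel₀ β hN_pos.ne']
  · have : NeZero M := ⟨hM.ne'⟩
    exact ciSup_le fun f => klBits_pushPMF_shiftPMF_tiltPMF_le hP (cappedLLR_nonneg N) hε.le
      (fun n _ => (geomPMF_tail_mul_le hδ hδ_half.le N n).trans (by linarith)) f
end
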